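/- arXiv:2409.05952 — 3 statements merged into one kernel-verified Lean document; each statement's English description precedes it below -/
import Mathlib

section
/- There exist constants δ > 0, c > 0 and x₀ such that for every real x ≥ x₀: c·x ≤ #{p prime : p ≥ δ·x·log x and p ∣ n²+1 for some positive integer n ≤ x} ≤ x. -/
/-!
The idea is Chebyshev's. With `ρ(q)` the number of `n ≤ N` such that `q ∣ n² + 1`, we have
`∑_{n ≤ N} log (n² + 1) = ∑_q Λ(q) ρ(q)`, and the left side is at least `2 N log N - 2 N`.
Modulo a prime power `q` there are at most `1 + χ₄(q)` square roots of `-1`, so by Mertens'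
theorem and its twist by `χ₄` (where `L(1, χ₄) ≠ 0` enters) the `q ≤ N` account for at most
`N log N + O(N)`. For `q > N` we have `ρ(q) ≤ 4`, so by Chebyshev's bounds the proper prime powers
contribute `O(N)` and the primes below `δ N log N` at most `4 log 4 · δ N log N`. For small `δ` the
remaining `≫ N log N` comes from primes `p ≥ δ N log N`, each contributing `O(log N)`, so there are
`≫ N` of them. Conversely, `n² + 1` has at most one prime factor whose square exceeds `n² + 1`, so
there are at most `N` of them.
-/

namespace LargePrimes

open Finset Filter Real
open Chebyshev (psi theta)
open scoped ArithmeticFunction.vonMangoldt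

section AbelSummation

theorem norm_sum_Ioc_smul_le {E : Type*} [NormedAddCommGroup E] [NormedSpace ℝ E]
    {f : ℕ → ℝ} {g : ℕ → E} {m : ℕ} {B : ℝ} (hf : AntitoneOn f (Set.Ioi m))
    (hf₀ : ∀ k, m < k → 0 ≤ f k) (hg : ∀ n, ‖∑ k ∈ Ioc m n, g k‖ ≤ B) (n : ℕ) :
    ‖∑ k ∈ Ioc m n, f k • g k‖ ≤ f (m + 1) * B := by
  have hB : 0 ≤ B := (norm_nonneg _).trans (hg m)
  rcases le_total n m with hnm | hmn
  · simpa [Ioc_eq_empty_of_le hnm] using mul_nonneg (hf₀ _ m.lt_succ_self) hB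
  have summation_by_parts : ‖∑ k ∈ Ioc m n, f k • g k - f (n + 1) • ∑ k ∈ Ioc m n, g k‖ ≤
      (f (m + 1) - f (n + 1)) * B := by
    induction n, hmn using Nat.le_induction with
    | base => simp
    | succ n hmn ih =>
      have hstep : 0 ≤ f (n + 1) - f (n + 2) :=
        sub_nonneg.2 (hf (Set.mem_Ioi.2 (by lia)) (Set.mem_Ioi.2 (by lia)) (by lia))
      calc ‖∑ k ∈ Ioc m (n + 1), f k • g k - f (n + 2) • ∑ k ∈ Ioc m (n + 1), g k‖
          = ‖(∑ k ∈ Ioc m n, f k • g k - f (n + 1) • ∑ k ∈ Ioc m n, g k) +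
              (f (n + 1) - f (n + 2)) • ∑ k ∈ Ioc m (n + 1), g k‖ := by
            rw [sum_Ioc_succ_top hmn, sum_Ioc_succ_top hmn]
            congr 1
            module
        _ ≤ (f (m + 1) - f (n + 1)) * B + (f (n + 1) - f (n + 2)) * B := by
            refine norm_add_le_of_le ih ?_
            rw [norm_smul, norm_of_nonneg hstep]
            exact mul_le_mul_of_nonneg_left (hg _) hstep
        _ = (f (m + 1) - f (n + 2)) * B := by ring
  have boundary : ‖f (n + 1) • ∑ k ∈ Ioc m n, g k‖ ≤ f (n + 1) * B := by
    rw [norm_smul, norm_of_nonneg (hf₀ _ (by lia))]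
    exact mul_le_mul_of_nonneg_left (hg n) (hf₀ _ (by lia))
  calc ‖∑ k ∈ Ioc m n, f k • g k‖
      ≤ (f (m + 1) - f (n + 1)) * B + f (n + 1) * B := by
        simpa using norm_add_le_of_le summation_by_parts boundary
    _ = f (m + 1) * B := by ring

end AbelSummation

section Mertens

theorem psi_natCast (N : ℕ) : psi N = ∑ d ∈ Ioc 0 N, Λ d := by
  rw [psi, Nat.floor_natCast]

theorem div_le_natDiv_add_one (N d : ℕ) : (N : ℝ) / d ≤ (N / d : ℕ) + 1 := by
  rw [← Nat.floor_div_eq_div (K := ℝ)]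
  exact (Nat.lt_floor_add_one _).le

theorem sum_log_eq_log_factorial (N : ℕ) : ∑ n ∈ Ioc 0 N, log n = log N.factorial := by
  rw [← prod_Ico_id_eq_factorial, Nat.cast_prod, log_prod]
  · rfl
  · exact fun n hn ↦ by have := (mem_Ico.1 hn).1; positivity

theorem sum_vonMangoldt_mul_natDiv (N : ℕ) :
    ∑ d ∈ Ioc 0 N, Λ d * (N / d : ℕ) = log N.factorial := by
  rw [← ArithmeticFunction.sum_Ioc_mul_zeta_eq_sum, ArithmeticFunction.vonMangoldt_mul_zeta,
    ← sum_log_eq_log_factorial]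
  rfl

theorem sum_vonMangoldt_div_le (N : ℕ) :
    ∑ d ∈ Ioc 0 N, Λ d / d ≤ log N + (log 4 + 4) := by
  rcases N.eq_zero_or_pos with rfl | hN
  · have : 0 ≤ log 4 := log_nonneg (by norm_num)
    simpa using by linarith
  have hN' : (0 : ℝ) < N := by exact_mod_cast hN
  refine le_of_mul_le_mul_left ?_ hN'
  calc N * ∑ d ∈ Ioc 0 N, Λ d / d
      = ∑ d ∈ Ioc 0 N, Λ d * (N / d) := by
        rw [mul_sum]
        exact sum_congr rfl fun d _ ↦ by ring
    _ ≤ ∑ d ∈ Ioc 0 N, Λ d * ((N / d : ℕ) + 1) := by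
        gcongr with d
        exact div_le_natDiv_add_one N d
    _ = log N.factorial + psi N := by
        simp only [mul_add, mul_one, sum_add_distrib, sum_vonMangoldt_mul_natDiv, psi_natCast]
    _ ≤ log ((N : ℝ) ^ N) + (log 4 + 4) * N := by
        gcongr
        · exact_mod_cast N.factorial_le_pow
        · exact Chebyshev.psi_le_const_mul_self hN'.le
    _ = N * (log N + (log 4 + 4)) := by rw [log_pow]; ring

end Mertens

section TwistedMertens

variable {𝕜 : Type*} [RCLike 𝕜] {χ : ℕ →* 𝕜} {B : ℝ}

theorem norm_le_one_of_norm_sum_Ioc_le (hB : ∀ m n, ‖∑ k ∈ Ioc m n, χ k‖ ≤ B) (n : ℕ) :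
    ‖χ n‖ ≤ 1 := by
  have norm_le (k : ℕ) : ‖χ k‖ ≤ max B ‖χ 0‖ := by
    cases k with
    | zero => exact le_max_right _ _
    | succ m => exact le_max_of_le_left (by simpa [Nat.Ioc_succ_singleton] using hB m (m + 1))
  -- `χ n ^ k = χ (n ^ k)` stays bounded as `k → ∞`.
  by_contra! hlt
  obtain ⟨k, hk⟩ := pow_unbounded_of_one_lt (max B ‖χ 0‖) hlt
  rw [← norm_pow, ← map_pow] at hk
  exact hk.not_ge (norm_le _)

/-- The partial sum `∑_{n ≤ N} χ(n) / n` of `L(1, χ)`. -/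
noncomputable def partialLSum (χ : ℕ →* 𝕜) (N : ℕ) : 𝕜 := ∑ n ∈ Ioc 0 N, (n : ℝ)⁻¹ • χ n

theorem norm_partialLSum_sub_le (hB : ∀ m n, ‖∑ k ∈ Ioc m n, χ k‖ ≤ B) {M N : ℕ} (h : M ≤ N) :
    ‖partialLSum χ N - partialLSum χ M‖ ≤ ((M : ℝ) + 1)⁻¹ * B := by
  rw [partialLSum, partialLSum, ← sum_Ioc_consecutive _ M.zero_le h, add_sub_cancel_left]
  have hanti : AntitoneOn (fun n : ℕ ↦ (n : ℝ)⁻¹) (Set.Ioi M) := fun a ha b _ hab ↦ by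
    have : 0 < a := (Nat.zero_le M).trans_lt ha
    simp only
    gcongr
  simpa using norm_sum_Ioc_smul_le hanti (fun k _ ↦ by positivity) (hB M) N

theorem norm_sum_log_div_smul_le (hB : ∀ m n, ‖∑ k ∈ Ioc m n, χ k‖ ≤ B) (N : ℕ) :
    ‖∑ n ∈ Ioc 0 N, (log n / n) • χ n‖ ≤ 1 + B := by
  have hB₀ : 0 ≤ B := (norm_nonneg _).trans (hB 0 0)
  have hχ₂ : ‖(log (2 : ℕ) / (2 : ℕ)) • χ 2‖ ≤ 1 := by
    rw [Nat.cast_ofNat, norm_smul, norm_of_nonneg (by positivity)]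
    exact mul_le_one₀ (by linarith [log_two_lt_d9]) (norm_nonneg _)
      (norm_le_one_of_norm_sum_Ioc_le hB 2)
  rcases le_total N 2 with hN | hN
  · interval_cases N
    · simpa using by linarith
    · simpa using by linarith
    · simpa [sum_Ioc_succ_top] using by linarith
  have hanti : AntitoneOn (fun n : ℕ ↦ log n / n) (Set.Ioi 2) := fun a ha b _ hab ↦ by
    have ha' : (3 : ℝ) ≤ a := by exact_mod_cast Nat.succ_le_of_lt ha
    have hab' : (a : ℝ) ≤ b := by exact_mod_cast hab
    have hea : exp 1 ≤ a := by linarith [exp_one_lt_d9]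
    exact log_div_self_antitoneOn hea (hea.trans hab') hab'
  have htail : ‖∑ n ∈ Ioc 2 N, (log n / n) • χ n‖ ≤ B := by
    refine (norm_sum_Ioc_smul_le hanti (fun k _ ↦ by positivity) (hB 2) N).trans ?_
    refine mul_le_of_le_one_left hB₀ (div_le_one_of_le₀ ?_ (by positivity))
    exact log_le_self (by positivity)
  have hhead : ∑ n ∈ Ioc 0 2, (log (n : ℕ) / (n : ℕ)) • χ n = (log (2 : ℕ) / (2 : ℕ)) • χ 2 := by
    simp [sum_Ioc_succ_top]
  rw [← sum_Ioc_consecutive _ (Nat.zero_le 2) hN, hhead]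
  exact norm_add_le_of_le hχ₂ htail

theorem sum_log_div_smul_eq_sum_vonMangoldt (χ : ℕ →* 𝕜) (N : ℕ) :
    ∑ n ∈ Ioc 0 N, (log n / n) • χ n =
      ∑ d ∈ Ioc 0 N, (Λ d / d) • χ d * partialLSum χ (N / d) := by
  let twistedΛ : ArithmeticFunction 𝕜 := ⟨fun d ↦ (Λ d / d) • χ d, by simp⟩
  let twistedζ : ArithmeticFunction 𝕜 := ⟨fun m ↦ (m : ℝ)⁻¹ • χ m, by simp⟩
  calc ∑ n ∈ Ioc 0 N, (log n / n) • χ n = ∑ n ∈ Ioc 0 N, (twistedΛ * twistedζ) n := by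
        refine sum_congr rfl fun n _ ↦ ?_
        rw [ArithmeticFunction.mul_apply, ← ArithmeticFunction.vonMangoldt_sum, sum_div, sum_smul,
          ← Nat.sum_divisorsAntidiagonal (fun d _ ↦ (Λ d / n) • χ n)]
        refine sum_congr rfl fun ⟨d, m⟩ hdm ↦ ?_
        obtain ⟨rfl, -⟩ := Nat.mem_divisorsAntidiagonal.1 hdm
        simp only [twistedΛ, twistedζ, ArithmeticFunction.coe_mk, smul_mul_smul_comm, map_mul]
        push_cast
        congr 1
        ring
    _ = ∑ d ∈ Ioc 0 N, (Λ d / d) • χ d * partialLSum χ (N / d) :=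
        ArithmeticFunction.sum_Ioc_mul_eq_sum_sum twistedΛ twistedζ N

theorem norm_vonMangoldt_div_smul_le (hB : ∀ m n, ‖∑ k ∈ Ioc m n, χ k‖ ≤ B) (d : ℕ) :
    ‖(Λ d / d) • χ d‖ ≤ Λ d / d := by
  rw [norm_smul, norm_of_nonneg (by positivity)]
  exact mul_le_of_le_one_right (by positivity) (norm_le_one_of_norm_sum_Ioc_le hB d)

theorem norm_sum_vonMangoldt_mul_partialLSum_le (hB : ∀ m n, ‖∑ k ∈ Ioc m n, χ k‖ ≤ B) (N : ℕ) :
    ‖(∑ d ∈ Ioc 0 N, (Λ d / d) • χ d) * partialLSum χ N‖ ≤ 1 + (log 4 + 5) * B := by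
  have hB₀ : 0 ≤ B := (norm_nonneg _).trans (hB 0 0)
  have term_le (d : ℕ) (hd : d ∈ Ioc 0 N) :
      ‖(Λ d / d) • χ d * (partialLSum χ N - partialLSum χ (N / d))‖ ≤ Λ d / N * B := by
    obtain ⟨hd₀, hdN⟩ := mem_Ioc.1 hd
    have hN₀ : 0 < N := hd₀.trans_le hdN
    calc _ ≤ Λ d / d * (((N / d : ℕ) + 1 : ℝ)⁻¹ * B) :=
          norm_mul_le_of_le (norm_vonMangoldt_div_smul_le hB d)
            (norm_partialLSum_sub_le hB (N.div_le_self d))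
      _ ≤ Λ d / d * ((N / d : ℝ)⁻¹ * B) := by
          gcongr
          exact div_le_natDiv_add_one N d
      _ = Λ d / N * B := by field_simp
  have error_le : ‖∑ d ∈ Ioc 0 N, (Λ d / d) • χ d * (partialLSum χ N - partialLSum χ (N / d))‖ ≤
      (log 4 + 4) * B := by
    refine (norm_sum_le_of_le _ term_le).trans ?_
    rw [← sum_mul, ← sum_div, ← psi_natCast]
    gcongr
    exact div_le_of_le_mul₀ (by positivity) (by positivity)
      (Chebyshev.psi_le_const_mul_self (by positivity))
  calc _ = ‖∑ d ∈ Ioc 0 N, (Λ d / d) • χ d * (partialLSum χ N - partialLSum χ (N / d)) +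
          ∑ n ∈ Ioc 0 N, (log n / n) • χ n‖ := by
        rw [sum_log_div_smul_eq_sum_vonMangoldt, ← sum_add_distrib, sum_mul]
        simp only [mul_sub, sub_add_cancel]
    _ ≤ (log 4 + 4) * B + (1 + B) := norm_add_le_of_le error_le (norm_sum_log_div_smul_le hB N)
    _ = 1 + (log 4 + 5) * B := by ring

end TwistedMertens

section ChiFour

/-- The nontrivial character modulo `4`, as a real-valued completely multiplicative function
on `ℕ`. -/
noncomputable def chiFour : ℕ →* ℝ :=
  (Int.castRingHom ℝ : ℤ →* ℝ).comp
    (ZMod.χ₄.toMonoidHom.comp (Nat.castRingHom (ZMod 4) : ℕ →* ZMod 4))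

theorem chiFour_apply (n : ℕ) : chiFour n = (ZMod.χ₄ n : ℤ) := rfl

theorem abs_chiFour_le_one (n : ℕ) : |chiFour n| ≤ 1 := by
  rcases ZMod.isQuadratic_χ₄ n with h | h | h <;> simp [chiFour_apply, h]

theorem sum_Ioc_zero_chiFour (n : ℕ) :
    ∑ k ∈ Ioc 0 n, chiFour k = if n % 4 = 1 ∨ n % 4 = 2 then 1 else 0 := by
  induction n with
  | zero => simp
  | succ n ih =>
    rw [sum_Ioc_succ_top n.zero_le, ih, chiFour_apply, ZMod.χ₄_nat_eq_if_mod_four]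
    have : n % 4 < 4 := Nat.mod_lt _ (by norm_num)
    split_ifs <;> first | lia | norm_num

theorem norm_sum_Ioc_chiFour_le_one (m n : ℕ) : ‖∑ k ∈ Ioc m n, chiFour k‖ ≤ 1 := by
  rcases le_total n m with hnm | hmn
  · simp [Ioc_eq_empty_of_le hnm]
  rw [← add_sub_cancel_left (∑ k ∈ Ioc 0 m, chiFour k) (∑ k ∈ Ioc m n, chiFour k),
    sum_Ioc_consecutive _ m.zero_le hmn, sum_Ioc_zero_chiFour, sum_Ioc_zero_chiFour]
  split_ifs <;> norm_num

theorem half_le_partialLSum_chiFour {N : ℕ} (hN : 1 ≤ N) : 1 / 2 ≤ partialLSum chiFour N := by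
  have h := norm_partialLSum_sub_le norm_sum_Ioc_chiFour_le_one hN
  have h₁ : partialLSum chiFour 1 = 1 := by simp [partialLSum]
  rw [h₁, norm_eq_abs, Nat.cast_one, one_add_one_eq_two, mul_one] at h
  linarith [(abs_le.1 h).1]

theorem sum_vonMangoldt_div_mul_chiFour_le (N : ℕ) :
    ∑ d ∈ Ioc 0 N, Λ d / d * chiFour d ≤ 2 * (log 4 + 6) := by
  have hlog : 0 ≤ log 4 := log_nonneg (by norm_num)
  rcases N.eq_zero_or_pos with rfl | hN
  · simpa using by linarith
  have hprod := (le_abs_self _).trans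
    (norm_sum_vonMangoldt_mul_partialLSum_le norm_sum_Ioc_chiFour_le_one N)
  have hL := half_le_partialLSum_chiFour hN
  simp only [smul_eq_mul] at hprod
  by_contra! hlt
  nlinarith

end ChiFour

section RootsModPrimePowers

theorem eq_or_eq_neg_of_sq_eq_sq_of_isLocalRing {R : Type*} [CommRing R] [IsLocalRing R] {a b : R}
    (h₂ : IsUnit (2 : R)) (hb : IsUnit b) (h : a ^ 2 = b ^ 2) : a = b ∨ a = -b := by
  have hmul : (b + a) * (b - a) = 0 := by linear_combination -h
  have hadd : IsUnit ((b + a) + (b - a)) := by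
    convert h₂.mul hb using 1
    ring
  rcases IsLocalRing.isUnit_or_isUnit_of_isUnit_add hadd with hu | hu
  · exact .inl (sub_eq_zero.1 (hu.mul_right_eq_zero.1 hmul)).symm
  · exact .inr (eq_neg_of_add_eq_zero_right (hu.mul_left_eq_zero.1 hmul))

theorem isLocalRing_zmod_of_isPrimePow {q : ℕ} (hq : IsPrimePow q) : IsLocalRing (ZMod q) := by
  have : Fact (1 < q) := ⟨hq.one_lt⟩
  obtain ⟨p, k, hp, -, rfl⟩ := hq
  have : Fact p.Prime := ⟨hp.nat_prime⟩
  exact IsLocalRing.of_surjective' (PadicInt.toZModPow k) (ZMod.ringHom_surjective _)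

theorem odd_of_isSquare_neg_one {q : ℕ} (hq : IsPrimePow q) (h₂ : q ≠ 2)
    (h : IsSquare (-1 : ZMod q)) : Odd q := by
  by_contra heven
  have hdvd : 2 ∣ q := (Nat.not_odd_iff_even.1 heven).two_dvd
  obtain ⟨p, k, hp, hk, rfl⟩ := hq
  obtain rfl : 2 = p := (Nat.prime_dvd_prime_iff_eq Nat.prime_two hp.nat_prime).1
    (Nat.prime_two.dvd_of_dvd_pow hdvd)
  have hk₂ : 2 ≤ k := by
    by_contra! hlt
    exact h₂ (by rw [show k = 1 by lia, pow_one])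
  exact absurd (ZMod.isSquare_neg_one_of_dvd (pow_dvd_pow 2 hk₂) h) (by decide)

theorem chiFour_eq_one_of_isSquare_neg_one {q : ℕ} (hq : Odd q)
    (h : IsSquare (-1 : ZMod q)) : chiFour q = 1 := by
  have hJ : jacobiSym (-1) q ≠ -1 := fun hJ ↦
    ZMod.nonsquare_of_jacobiSym_eq_neg_one hJ (by exact_mod_cast h)
  rw [jacobiSym.at_neg_one hq] at hJ
  have := Nat.odd_iff.1 hq
  rw [chiFour_apply]
  rcases Nat.odd_mod_four_iff.1 this with h₁ | h₃
  · simp [ZMod.χ₄_nat_one_mod_four h₁]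
  · exact absurd (ZMod.χ₄_nat_three_mod_four h₃) hJ

theorem card_sq_eq_neg_one_le {q : ℕ} [NeZero q] (hq : IsPrimePow q) :
    (#{y : ZMod q | y ^ 2 = -1} : ℝ) ≤ 1 + chiFour q := by
  have hnonneg : 0 ≤ 1 + chiFour q := by linarith [(abs_le.1 (abs_chiFour_le_one q)).1]
  rcases ({y : ZMod q | y ^ 2 = -1} : Finset _).eq_empty_or_nonempty with hempty | ⟨y, hy⟩
  · simpa [hempty] using hnonneg
  replace hy : y ^ 2 = -1 := (mem_filter.1 hy).2
  rcases eq_or_ne q 2 with rfl | h₂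
  · simp [chiFour_apply, show ZMod.χ₄ 2 = 0 by decide, filter_eq']
  have hsq : IsSquare (-1 : ZMod q) := ⟨y, by rw [← hy, sq]⟩
  have hodd := odd_of_isSquare_neg_one hq h₂ hsq
  have := isLocalRing_zmod_of_isPrimePow hq
  have two_isUnit : IsUnit (2 : ZMod q) :=
    (ZMod.isUnit_iff_coprime 2 q).2 (Nat.coprime_two_left.2 hodd)
  have y_isUnit : IsUnit y := (isUnit_pow_iff two_ne_zero).1 (hy ▸ isUnit_one.neg)
  have hsub : ({z : ZMod q | z ^ 2 = -1} : Finset _) ⊆ {y, -y} := fun z hz ↦ by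
    simpa using eq_or_eq_neg_of_sq_eq_sq_of_isLocalRing two_isUnit y_isUnit
      ((mem_filter.1 hz).2.trans hy.symm)
  rw [chiFour_eq_one_of_isSquare_neg_one hodd hsq, one_add_one_eq_two]
  exact_mod_cast (card_le_card hsub).trans card_le_two

theorem card_filter_natCast_eq_le {q : ℕ} (N : ℕ) (y : ZMod q) :
    #{n ∈ Ioc 0 N | ((n : ℕ) : ZMod q) = y} ≤ N / q + 1 := by
  rw [← card_range (N / q + 1)]
  refine card_le_card_of_injOn (· / q) (fun n hn ↦ ?_) fun m hm n hn hdiv ↦ ?_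
  · have hn' := (mem_Ioc.1 (mem_filter.1 hn).1).2
    simpa using Nat.lt_succ_of_le (Nat.div_le_div_right hn')
  · have hmod : m % q = n % q :=
      (ZMod.natCast_eq_natCast_iff' _ _ _).1 ((mem_filter.1 hm).2.trans (mem_filter.1 hn).2.symm)
    rw [← Nat.div_add_mod m q, ← Nat.div_add_mod n q, hmod, show m / q = n / q from hdiv]

theorem card_filter_natCast_mem_le {q : ℕ} (N : ℕ) (S : Finset (ZMod q)) :
    #{n ∈ Ioc 0 N | ((n : ℕ) : ZMod q) ∈ S} ≤ #S * (N / q + 1) := by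
  have hunion : ({n ∈ Ioc 0 N | ((n : ℕ) : ZMod q) ∈ S} : Finset ℕ) =
      S.biUnion fun y ↦ {n ∈ Ioc 0 N | ((n : ℕ) : ZMod q) = y} := by
    ext n
    simp [and_comm]
  rw [hunion]
  exact card_biUnion_le_card_mul _ _ _ fun y _ ↦ card_filter_natCast_eq_le N y

theorem card_dvd_sq_add_one_le {q : ℕ} (hq : IsPrimePow q) (N : ℕ) :
    (#{n ∈ Ioc 0 N | q ∣ n ^ 2 + 1} : ℝ) ≤ (1 + chiFour q) * (N / q + 1) := by
  have : NeZero q := ⟨hq.ne_zero⟩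
  have dvd_iff (n : ℕ) :
      q ∣ n ^ 2 + 1 ↔ (n : ZMod q) ∈ ({y | y ^ 2 = -1} : Finset (ZMod q)) := by
    rw [← ZMod.natCast_eq_zero_iff, mem_filter, eq_neg_iff_add_eq_zero]
    simp
  simp only [dvd_iff]
  calc _ ≤ (#{y : ZMod q | y ^ 2 = -1} : ℝ) * ((N / q : ℕ) + 1) := by
        exact_mod_cast card_filter_natCast_mem_le N _
    _ ≤ (1 + chiFour q) * (N / q + 1) := by
        gcongr
        · exact (Nat.cast_nonneg _).trans (card_sq_eq_neg_one_le hq)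
        · exact card_sq_eq_neg_one_le hq
        · exact Nat.cast_div_le

theorem vonMangoldt_mul_card_dvd_sq_add_one_le (q N : ℕ) :
    Λ q * #{n ∈ Ioc 0 N | q ∣ n ^ 2 + 1} ≤ Λ q * ((1 + chiFour q) * (N / q + 1)) := by
  by_cases hq : IsPrimePow q
  · gcongr
    exact card_dvd_sq_add_one_le hq N
  · simp [ArithmeticFunction.vonMangoldt_eq_zero_iff.2 hq]

end RootsModPrimePowers

section ChebyshevSums

theorem sum_log_eq_sum_vonMangoldt_mul_card {ι : Type*} {s : Finset ι} {f : ι → ℕ} {M : ℕ}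
    (hf : ∀ i ∈ s, f i ∈ Ioc 0 M) :
    ∑ i ∈ s, log (f i) = ∑ q ∈ Ioc 0 M, Λ q * #{i ∈ s | q ∣ f i} := by
  have log_eq (i : ι) (hi : i ∈ s) : log (f i) = ∑ q ∈ Ioc 0 M, if q ∣ f i then Λ q else 0 := by
    obtain ⟨hpos, hle⟩ := mem_Ioc.1 (hf i hi)
    rw [← ArithmeticFunction.vonMangoldt_sum, ← sum_filter]
    congr 1
    ext q
    simp only [Nat.mem_divisors, mem_filter, mem_Ioc]
    exact ⟨fun h ↦ ⟨⟨Nat.pos_of_dvd_of_pos h.1 hpos, (Nat.le_of_dvd hpos h.1).trans hle⟩, h.1⟩,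
      fun h ↦ ⟨h.2, hpos.ne'⟩⟩
  rw [sum_congr rfl log_eq, sum_comm]
  refine sum_congr rfl fun q _ ↦ ?_
  rw [← sum_filter, sum_const, nsmul_eq_mul, mul_comm]

theorem sum_vonMangoldt_le_of_subset {T : Finset ℕ} {M : ℕ} (hT : T ⊆ Ioc 0 M) (y : ℝ) :
    ∑ q ∈ T, Λ q ≤ (psi M - theta M) + theta y + #{p ∈ T | p.Prime ∧ y ≤ (p : ℕ)} * log M := by
  have nonprimes_le : ∑ q ∈ T with ¬ q.Prime, Λ q ≤ psi M - theta M := by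
    rw [Chebyshev.psi_sub_theta_eq_sum_not_prime, Nat.floor_natCast]
    exact sum_le_sum_of_subset_of_nonneg (filter_subset_filter _ hT) fun _ _ _ ↦ by positivity
  have small_primes_le : ∑ p ∈ T with p.Prime ∧ ¬ y ≤ (p : ℕ), Λ p ≤ theta y := by
    rw [theta]
    refine (sum_congr rfl fun p hp ↦ ?_).trans_le
      (sum_le_sum_of_subset_of_nonneg (f := fun p : ℕ ↦ log p) (fun p hp ↦ ?_)
        fun _ _ _ ↦ by positivity)
    · exact ArithmeticFunction.vonMangoldt_apply_prime (mem_filter.1 hp).2.1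
    · obtain ⟨-, hprime, hlt⟩ := mem_filter.1 hp
      exact mem_filter.2 ⟨mem_Ioc.2 ⟨hprime.pos, Nat.le_floor (not_le.1 hlt).le⟩, hprime⟩
  have large_primes_le : ∑ p ∈ T with p.Prime ∧ y ≤ (p : ℕ), Λ p ≤
      #{p ∈ T | p.Prime ∧ y ≤ (p : ℕ)} * log M := by
    rw [← nsmul_eq_mul]
    refine sum_le_card_nsmul _ _ _ fun p hp ↦ ArithmeticFunction.vonMangoldt_le_log.trans ?_
    obtain ⟨hpos, hle⟩ := mem_Ioc.1 (hT (mem_filter.1 hp).1)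
    gcongr
  rw [← sum_filter_not_add_sum_filter T Nat.Prime, ← sum_filter_not_add_sum_filter
    (T.filter Nat.Prime) (fun p : ℕ ↦ y ≤ p), filter_filter, filter_filter]
  linarith

end ChebyshevSums

section LargePrimeFactors

/-- The primes `p ≥ y` that divide at least one of the values `f 1, …, f N`. -/
noncomputable def largePrimeFactors (f : ℕ → ℕ) (N : ℕ) (y : ℝ) : Finset ℕ :=
  (Ioc 0 N).biUnion fun n ↦ {p ∈ (f n).primeFactors | y ≤ (p : ℕ)}

theorem mem_largePrimeFactors {f : ℕ → ℕ} (hf : ∀ n, f n ≠ 0) {N p : ℕ} {y : ℝ} :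
    p ∈ largePrimeFactors f N y ↔ p.Prime ∧ y ≤ p ∧ ∃ n ∈ Ioc 0 N, p ∣ f n := by
  simp only [largePrimeFactors, mem_biUnion, mem_filter, Nat.mem_primeFactors]
  grind

theorem card_primeFactors_filter_le_one {m : ℕ} {y : ℝ} (hy : 0 ≤ y) (h : m < y ^ 2) :
    #{p ∈ m.primeFactors | y ≤ (p : ℕ)} ≤ 1 := by
  refine card_le_one.2 fun p hp q hq ↦ ?_
  obtain ⟨hpm, hyp⟩ := mem_filter.1 hp
  obtain ⟨hqm, hyq⟩ := mem_filter.1 hq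
  rw [Nat.mem_primeFactors] at hpm hqm
  by_contra hne
  have hdvd : p * q ∣ m :=
    ((Nat.coprime_primes hpm.1 hqm.1).2 hne).mul_dvd_of_dvd_of_dvd hpm.2.1 hqm.2.1
  have hle : ((p * q : ℕ) : ℝ) ≤ m := by
    exact_mod_cast Nat.le_of_dvd (Nat.pos_of_ne_zero hpm.2.2) hdvd
  have : y ^ 2 ≤ (p * q : ℕ) := by
    push_cast
    nlinarith
  linarith

theorem card_largePrimeFactors_le {f : ℕ → ℕ} {N : ℕ} {y : ℝ} (hy : 0 ≤ y)
    (hf : ∀ n ∈ Ioc 0 N, f n < y ^ 2) : #(largePrimeFactors f N y) ≤ N := by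
  simpa [largePrimeFactors] using card_biUnion_le_card_mul (Ioc 0 N) _ 1
    fun n hn ↦ card_primeFactors_filter_le_one hy (hf n hn)

end LargePrimeFactors

section SqAddOne

theorem two_mul_mul_log_sub_le_sum_log_sq_add_one (N : ℕ) :
    2 * (N * log N - N) ≤ ∑ n ∈ Ioc 0 N, log (n ^ 2 + 1 : ℕ) := by
  have hfactorial : N * log N - N ≤ log N.factorial := by
    rcases eq_or_ne N 0 with rfl | hN
    · simp
    have : 0 ≤ log (2 * π) := log_nonneg (by linarith [pi_gt_three])
    linarith [Stirling.le_log_factorial_stirling hN, log_natCast_nonneg N]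
  calc 2 * (N * log N - N) ≤ ∑ n ∈ Ioc 0 N, 2 * log n := by
        rw [← mul_sum, sum_log_eq_log_factorial]
        gcongr
    _ ≤ ∑ n ∈ Ioc 0 N, log (n ^ 2 + 1 : ℕ) := by
        refine sum_le_sum fun n hn ↦ ?_
        have : 0 < n := (mem_Ioc.1 hn).1
        rw [← Nat.cast_two, ← log_pow]
        gcongr
        exact_mod_cast Nat.le_succ _

theorem sum_vonMangoldt_mul_card_dvd_sq_add_one_le (N : ℕ) :
    ∑ q ∈ Ioc 0 N, Λ q * #{n ∈ Ioc 0 N | q ∣ n ^ 2 + 1} ≤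
      N * log N + (5 * log 4 + 24) * N := by
  calc _ ≤ ∑ q ∈ Ioc 0 N, (N * (Λ q / q) + N * (Λ q / q * chiFour q) + 2 * Λ q) := by
        refine sum_le_sum fun q _ ↦ (vonMangoldt_mul_card_dvd_sq_add_one_le q N).trans ?_
        have hχ : Λ q * chiFour q ≤ Λ q :=
          mul_le_of_le_one_right (by positivity) (abs_le.1 (abs_chiFour_le_one q)).2
        calc _ = N * (Λ q / q) + N * (Λ q / q * chiFour q) + (Λ q + Λ q * chiFour q) := by ring
          _ ≤ _ := by linarith
    _ = N * ∑ q ∈ Ioc 0 N, Λ q / q + N * ∑ q ∈ Ioc 0 N, Λ q / q * chiFour q + 2 * psi N := by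
        simp only [sum_add_distrib, mul_sum, psi_natCast]
    _ ≤ N * (log N + (log 4 + 4)) + N * (2 * (log 4 + 6)) + 2 * ((log 4 + 4) * N) := by
        gcongr
        · exact sum_vonMangoldt_div_le N
        · exact sum_vonMangoldt_div_mul_chiFour_le N
        · exact Chebyshev.psi_le_const_mul_self (by positivity)
    _ = N * log N + (5 * log 4 + 24) * N := by ring

theorem vonMangoldt_mul_card_dvd_sq_add_one_le_of_lt {q N : ℕ} (h : N < q) :
    Λ q * #{n ∈ Ioc 0 N | q ∣ n ^ 2 + 1} ≤ 4 * Λ q := by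
  have hχ := abs_le.1 (abs_chiFour_le_one q)
  have hdiv : (N : ℝ) / q ≤ 1 := div_le_one_of_le₀ (by exact_mod_cast h.le) (by positivity)
  calc _ ≤ Λ q * ((1 + chiFour q) * (N / q + 1)) := vonMangoldt_mul_card_dvd_sq_add_one_le q N
    _ ≤ Λ q * (2 * 2) := by
        gcongr <;> linarith
    _ = 4 * Λ q := by ring

theorem sum_Ioc_vonMangoldt_mul_card_dvd_sq_add_one_le (N : ℕ) (y : ℝ) :
    ∑ q ∈ Ioc N (N ^ 2 + 1), Λ q * #{n ∈ Ioc 0 N | q ∣ n ^ 2 + 1} ≤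
      4 * ((psi (N ^ 2 + 1 : ℕ) - theta (N ^ 2 + 1 : ℕ)) + theta y +
        #(largePrimeFactors (fun n ↦ n ^ 2 + 1) N y) * log (N ^ 2 + 1 : ℕ)) := by
  let T : Finset ℕ := {q ∈ Ioc N (N ^ 2 + 1) | ∃ n ∈ Ioc 0 N, q ∣ n ^ 2 + 1}
  have hT : T ⊆ Ioc 0 (N ^ 2 + 1) :=
    (filter_subset _ _).trans (Ioc_subset_Ioc_left N.zero_le)
  have large_primes_subset :
      {p ∈ T | p.Prime ∧ y ≤ (p : ℕ)} ⊆ largePrimeFactors (fun n ↦ n ^ 2 + 1) N y := fun p hp ↦ by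
    obtain ⟨hpT, hprime, hyp⟩ := mem_filter.1 hp
    exact (mem_largePrimeFactors fun n ↦ Nat.succ_ne_zero (n ^ 2)).2
      ⟨hprime, hyp, (mem_filter.1 hpT).2⟩
  calc _ = ∑ q ∈ T, Λ q * #{n ∈ Ioc 0 N | q ∣ n ^ 2 + 1} := by
        refine (sum_subset (filter_subset _ _) fun q hq hqT ↦ ?_).symm
        have : {n ∈ Ioc 0 N | q ∣ n ^ 2 + 1} = ∅ :=
          filter_eq_empty_iff.2 fun n hn hdvd ↦ hqT (mem_filter.2 ⟨hq, n, hn, hdvd⟩)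
        simp [this]
    _ ≤ ∑ q ∈ T, 4 * Λ q := sum_le_sum fun q hq ↦
        vonMangoldt_mul_card_dvd_sq_add_one_le_of_lt (mem_Ioc.1 (mem_filter.1 hq).1).1
    _ ≤ _ := by
        rw [← mul_sum]
        grw [sum_vonMangoldt_le_of_subset hT y, card_le_card large_primes_subset]

theorem exists_mul_log_le_card_largePrimeFactors : ∃ C : ℝ, ∀ (N : ℕ) (y : ℝ), 0 < N → 0 ≤ y →
    N * log N ≤ C * N + 4 * log 4 * y +
      4 * #(largePrimeFactors (fun n ↦ n ^ 2 + 1) N y) * log (N ^ 2 + 1 : ℕ) := by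
  obtain ⟨K, hK⟩ := Chebyshev.psi_sub_theta_le_mul_sqrt
  refine ⟨2 + (5 * log 4 + 24) + 8 * |K|, fun N y hN hy ↦ ?_⟩
  have hN' : (1 : ℝ) ≤ N := by exact_mod_cast hN
  have values_mem : ∀ n ∈ Ioc 0 N, n ^ 2 + 1 ∈ Ioc 0 (N ^ 2 + 1) := fun n hn ↦
    mem_Ioc.2 ⟨by positivity, by gcongr; exact (mem_Ioc.1 hn).2⟩
  have hlower := two_mul_mul_log_sub_le_sum_log_sq_add_one N
  rw [sum_log_eq_sum_vonMangoldt_mul_card values_mem,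
    ← sum_Ioc_consecutive _ N.zero_le (by nlinarith : N ≤ N ^ 2 + 1)] at hlower
  have nonprime_le : psi (N ^ 2 + 1 : ℕ) - theta (N ^ 2 + 1 : ℕ) ≤ |K| * (2 * N) := by
    have hsqrt : √(N ^ 2 + 1 : ℕ) ≤ 2 * N := by
      rw [sqrt_le_left (by positivity)]
      push_cast
      nlinarith
    grw [hK, le_abs_self K, hsqrt]
  linarith [sum_vonMangoldt_mul_card_dvd_sq_add_one_le N,
    sum_Ioc_vonMangoldt_mul_card_dvd_sq_add_one_le N y, Chebyshev.theta_le_log4_mul_x hy]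

end SqAddOne

section Asymptotics

theorem setOf_prime_dvd_eq_largePrimeFactors {f : ℕ → ℕ} (hf : ∀ n, f n ≠ 0) {x : ℝ}
    (hx : 0 ≤ x) (y : ℝ) :
    {p : ℕ | p.Prime ∧ y ≤ p ∧ ∃ n : ℕ, 1 ≤ n ∧ n ≤ x ∧ p ∣ f n} =
      largePrimeFactors f ⌊x⌋₊ y := by
  ext p
  simp only [Set.mem_ofPred_eq, mem_coe, mem_largePrimeFactors hf, mem_Ioc, Nat.le_floor_iff hx,
    Nat.succ_le_iff, and_assoc]

theorem mul_log_sub_two_mul_le_floor_mul_log_floor {x : ℝ} (hx : 2 ≤ x) :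
    x * log x - 2 * x ≤ ⌊x⌋₊ * log ⌊x⌋₊ := by
  have hfloor : x - 1 ≤ ⌊x⌋₊ := (Nat.sub_one_lt_floor x).le
  have hlog : log x - 1 ≤ log ⌊x⌋₊ := by
    calc log x - 1 ≤ log x - log 2 := by linarith [log_two_lt_d9]
      _ = log (x / 2) := (log_div (by positivity) two_ne_zero).symm
      _ ≤ log ⌊x⌋₊ := log_le_log (by positivity) (by linarith)
  calc x * log x - 2 * x ≤ (x - 1) * (log x - 1) := by linarith [log_le_self (x := x) (by linarith)]
    _ ≤ (x - 1) * log ⌊x⌋₊ := by gcongr; linarith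
    _ ≤ ⌊x⌋₊ * log ⌊x⌋₊ := by gcongr

theorem log_floor_sq_add_one_le {x : ℝ} (hx : 2 ≤ x) :
    log (⌊x⌋₊ ^ 2 + 1 : ℕ) ≤ 3 * log x := by
  rw [← Nat.cast_ofNat (R := ℝ) (n := 3), ← log_pow]
  refine log_le_log (by positivity) ?_
  push_cast
  grw [Nat.floor_le (by linarith : 0 ≤ x)]
  nlinarith [sq_nonneg x]

theorem exists_eventually_mul_le_card_largePrimeFactors {δ : ℝ} (hδ₀ : 0 ≤ δ)
    (hδ : 4 * log 4 * δ < 1) :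
    ∃ c > 0, ∀ᶠ x : ℝ in atTop,
      c * x ≤ #(largePrimeFactors (fun n ↦ n ^ 2 + 1) ⌊x⌋₊ (δ * x * log x)) := by
  obtain ⟨C, hC⟩ := exists_mul_log_le_card_largePrimeFactors
  set κ := 1 - 4 * log 4 * δ
  have κ_pos : 0 < κ := by linarith
  refine ⟨κ / 24, by positivity, ?_⟩
  filter_upwards [eventually_ge_atTop 2,
    tendsto_log_atTop.eventually_ge_atTop ((2 + |C|) / (κ / 2))] with x hx hlog
  have log_pos : 0 < log x := Real.log_pos (by linarith)
  have floor_le : (⌊x⌋₊ : ℝ) ≤ x := Nat.floor_le (by linarith)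
  set s := #(largePrimeFactors (fun n ↦ n ^ 2 + 1) ⌊x⌋₊ (δ * x * log x))
  have hmain : x * log x - 2 * x ≤ |C| * x + 4 * log 4 * (δ * x * log x) + 4 * s * (3 * log x) :=
    calc x * log x - 2 * x ≤ ⌊x⌋₊ * log ⌊x⌋₊ := mul_log_sub_two_mul_le_floor_mul_log_floor hx
      _ ≤ C * ⌊x⌋₊ + 4 * log 4 * (δ * x * log x) + 4 * s * log (⌊x⌋₊ ^ 2 + 1 : ℕ) :=
        hC _ _ (Nat.floor_pos.2 (by linarith)) (by positivity)
      _ ≤ _ := by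
        grw [le_abs_self C, floor_le, log_floor_sq_add_one_le hx]
  have hlinear : (2 + |C|) * x ≤ log x * (κ / 2) * x := by
    grw [← (div_le_iff₀ (by positivity)).1 hlog]
  refine le_of_mul_le_mul_right ?_ log_pos
  linarith

theorem eventually_card_largePrimeFactors_sq_add_one_le {δ : ℝ} (hδ : 0 < δ) :
    ∀ᶠ x : ℝ in atTop,
      (#(largePrimeFactors (fun n ↦ n ^ 2 + 1) ⌊x⌋₊ (δ * x * log x)) : ℝ) ≤ x := by
  filter_upwards [eventually_ge_atTop 1, tendsto_log_atTop.eventually_ge_atTop (2 / δ)]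
    with x hx hlog
  have two_mul_le : 2 * x ≤ δ * x * log x := by
    grw [(div_le_iff₀ hδ).1 hlog]
    linarith
  have values_lt (n : ℕ) (hn : n ∈ Ioc 0 ⌊x⌋₊) : ((n ^ 2 + 1 : ℕ) : ℝ) < (δ * x * log x) ^ 2 := by
    have hnx : (n : ℝ) ≤ x := (Nat.le_floor_iff (by linarith)).1 (mem_Ioc.1 hn).2
    grw [← two_mul_le]
    push_cast
    nlinarith
  calc _ ≤ (⌊x⌋₊ : ℝ) := by exact_mod_cast card_largePrimeFactors_le (by linarith) values_lt
    _ ≤ x := Nat.floor_le (by linarith)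

end Asymptotics

end LargePrimes

open LargePrimes

/-- The number of primes `p ≥ δ x log x` dividing `n²+1` for some positive integer `n ≤ x`
is of order `x`. -/
theorem count_large_primes_dividing_values
    : ∃ δ : ℝ, 0 < δ ∧ ∃ c : ℝ, 0 < c ∧ ∃ x₀ : ℝ, ∀ x : ℝ, x₀ ≤ x →
      c * x ≤
        ({p : ℕ | p.Prime ∧ δ * x * Real.log x ≤ (p : ℝ) ∧
          ∃ n : ℕ, 1 ≤ n ∧ (n : ℝ) ≤ x ∧ p ∣ (n^2 + 1)}.ncard : ℝ) ∧
      ({p : ℕ | p.Prime ∧ δ * x * Real.log x ≤ (p : ℝ) ∧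
          ∃ n : ℕ, 1 ≤ n ∧ (n : ℝ) ≤ x ∧ p ∣ (n^2 + 1)}.ncard : ℝ) ≤ x := by
  have δ_small : 4 * Real.log 4 * (1 / 8 : ℝ) < 1 := by
    linarith [Real.log_four_eq, Real.log_two_lt_d9]
  obtain ⟨c, c_pos, hlower⟩ := exists_eventually_mul_le_card_largePrimeFactors (by norm_num) δ_small
  have hupper := eventually_card_largePrimeFactors_sq_add_one_le (δ := 1 / 8) (by norm_num)
  refine ⟨1 / 8, by norm_num, c, c_pos, Filter.eventually_atTop.1 ?_⟩
  filter_upwards [hlower, hupper, Filter.eventually_ge_atTop 0] with x hlower_x hupper_x hx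
  rw [setOf_prime_dvd_eq_largePrimeFactors (fun n ↦ Nat.succ_ne_zero (n ^ 2)) hx,
    Set.ncard_coe_finset]
  exact ⟨hlower_x, hupper_x⟩
end

section
/- Let P ∈ ℤ[x] be a polynomial that is either an irreducible quadratic or a product of at least two pairwise non-proportional linear factors a_i x + b_i over ℤ (i.e. a_i b_j − a_j b_i ≠ 0 for i ≠ j), assume P is admissible, and assume P(n) ≥ 2 for all positive integers n. Then ∑_p (#{n ≤ N : the largest prime factor of P(n) equals p})² = o(N²) as N → ∞, where the sum is over all primes p; that is, for every ε > 0 there exists N₀ such that for all N ≥ N₀ the sum is at most ε·N². -/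
/-- `p` is the largest prime factor of the integer `m`. -/
def IsMaxPrimeFac (p : ℕ) (m : ℤ) : Prop :=
  p.Prime ∧ (p : ℤ) ∣ m ∧ ∀ q : ℕ, q.Prime → (q : ℤ) ∣ m → q ≤ p

/-!
Let `A p` be the set of `n ≤ N` for which the largest prime factor of `P n` is `p`. These sets are
disjoint, so `∑ (#(A p))² ≤ N * sup (#(A p))` and it suffices that `#(A p) = o(N)` uniformly in `p`.
For `p ≥ K` the condition `p ∣ P n` confines `n` to at most `deg P` residue classes modulo `p`,
whence `#(A p) ≤ deg P * (N / K + 1)`. For `p < K` the value `P n` is `K`-smooth; as there are only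
polylogarithmically many `K`-smooth numbers up to `N ^ (deg P + 1)`, and `|P|` takes each value at
most `2 * deg P` times, the number of such `n` is polylogarithmic in `N`.
-/

open Asymptotics Filter Finset Polynomial

section Polynomial

lemma natDegree_prod_linear {R ι : Type*} [CommSemiring R] [NoZeroDivisors R] (s : Finset ι)
    {a : ι → R} (b : ι → R) (ha : ∀ i ∈ s, a i ≠ 0) :
    (∏ i ∈ s, (C (a i) * X + C (b i))).natDegree = #s := by
  have hdeg (i) (hi : i ∈ s) : (C (a i) * X + C (b i)).natDegree = 1 :=
    natDegree_linear (ha i hi)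
  have hne (i) (hi : i ∈ s) : C (a i) * X + C (b i) ≠ 0 :=
    ne_zero_of_natDegree_gt (n := 0) (by simp [hdeg i hi])
  rw [natDegree_prod s _ hne, sum_congr rfl hdeg, sum_const, smul_eq_mul, mul_one]

variable {R : Type*} [CommRing R]

lemma card_filter_eval_mem_le [IsDomain R] [DecidableEq R] {P : R[X]} (hP : 0 < P.natDegree)
    (s T : Finset R) : #{x ∈ s | P.eval x ∈ T} ≤ P.natDegree * #T := by
  have hdeg : 0 < P.degree := natDegree_pos_iff_degree_pos.mp hP
  refine card_le_mul_card_image_of_maps_to (f := (P.eval ·)) (by simp) _ fun c _ => ?_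
  calc #{x ∈ {x ∈ s | P.eval x ∈ T} | P.eval x = c} ≤ #(P - C c).roots.toFinset := by
        refine card_le_card fun x hx => ?_
        rw [Multiset.mem_toFinset, mem_roots_sub_C hdeg]
        exact (mem_filter.mp hx).2
    _ ≤ (P - C c).roots.card := Multiset.toFinset_card_le _
    _ ≤ P.natDegree := card_roots_sub_C' hdeg

lemma card_filter_natAbs_eval_mem_le {P : ℤ[X]} (hP : 0 < P.natDegree) (s T : Finset ℕ) :
    #(s.filter fun n : ℕ => (P.eval (n : ℤ)).natAbs ∈ T) ≤ 2 * P.natDegree * #T := by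
  have hsq : (P ^ 2).natDegree = 2 * P.natDegree := natDegree_pow P 2
  calc #(s.filter fun n : ℕ => (P.eval (n : ℤ)).natAbs ∈ T)
      ≤ #{x ∈ s.image ((↑) : ℕ → ℤ) |
          (P ^ 2).eval x ∈ T.image fun m : ℕ => (m : ℤ) ^ 2} := by
        refine card_le_card_of_injOn ((↑) : ℕ → ℤ) (fun n hn => ?_) Nat.cast_injective.injOn
        obtain ⟨hns, hnT⟩ := mem_filter.mp hn
        refine mem_filter.mpr ⟨mem_image_of_mem _ hns, mem_image.mpr ⟨_, hnT, ?_⟩⟩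
        rw [eval_pow, Int.natCast_natAbs, sq_abs]
    _ ≤ 2 * P.natDegree * #(T.image fun m : ℕ => (m : ℤ) ^ 2) :=
        hsq ▸ card_filter_eval_mem_le (by lia) _ _
    _ ≤ 2 * P.natDegree * #T := by gcongr; exact card_image_le

lemma abs_eval_le_sum_abs_coeff_mul_pow [LinearOrder R] [IsStrictOrderedRing R] (P : R[X])
    {x y : R} (hxy : |x| ≤ y) (hy : 1 ≤ y) :
    |P.eval x| ≤ (∑ i ∈ range (P.natDegree + 1), |P.coeff i|) * y ^ P.natDegree := by
  rw [eval_eq_sum_range, sum_mul]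
  refine (abs_sum_le_sum_abs _ _).trans (sum_le_sum fun i hi => ?_)
  have hpow : |x| ^ i ≤ y ^ P.natDegree :=
    (pow_le_pow_left₀ (abs_nonneg x) hxy i).trans
      (pow_le_pow_right₀ hy (mem_range_succ_iff.mp hi))
  rw [abs_mul, abs_pow]
  gcongr

lemma eventually_forall_natAbs_eval_le_pow (P : ℤ[X]) :
    ∀ᶠ N : ℕ in atTop, ∀ n ≤ N, (P.eval (n : ℤ)).natAbs ≤ N ^ (P.natDegree + 1) := by
  set c := ∑ i ∈ range (P.natDegree + 1), |P.coeff i|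
  filter_upwards [eventually_ge_atTop c.toNat, eventually_ge_atTop 1] with N hcN hN n hnN
  have hcN' : c ≤ N := Int.toNat_le.mp hcN
  zify
  calc |P.eval (n : ℤ)| ≤ c * (N : ℤ) ^ P.natDegree :=
        abs_eval_le_sum_abs_coeff_mul_pow P (by simpa using hnN) (by exact_mod_cast hN)
    _ ≤ N * (N : ℤ) ^ P.natDegree := by gcongr
    _ = (N : ℤ) ^ (P.natDegree + 1) := (pow_succ' _ _).symm

end Polynomial

section ResidueClasses

lemma card_filter_natCast_mem_le {m : ℕ} (T : Finset (ZMod m)) (N : ℕ) :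
    #((Icc 1 N).filter fun n : ℕ => (n : ZMod m) ∈ T) ≤ #T * (N / m + 1) := by
  rw [← card_range (N / m + 1), ← card_product]
  refine card_le_card_of_injOn (fun n : ℕ => ((n : ZMod m), n / m)) (fun n hn => ?_) ?_
  · obtain ⟨hnN, hnT⟩ := mem_filter.mp hn
    exact mem_product.mpr ⟨hnT,
      mem_range_succ_iff.mpr (Nat.div_le_div_right (mem_Icc.mp hnN).2)⟩
  · intro n _ n' _ h
    obtain ⟨hmod, hdiv⟩ := Prod.mk.inj h
    rw [← Nat.div_add_mod n m, ← Nat.div_add_mod n' m,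
      (ZMod.natCast_eq_natCast_iff' n n' m).mp hmod, hdiv]

lemma card_filter_dvd_eval_le {P : ℤ[X]} {p : ℕ} (hp : p.Prime)
    (hlc : ¬(p : ℤ) ∣ P.leadingCoeff) (N : ℕ) :
    #((Icc 1 N).filter fun n : ℕ => (p : ℤ) ∣ P.eval (n : ℤ)) ≤ P.natDegree * (N / p + 1) := by
  have : Fact p.Prime := ⟨hp⟩
  set Q := P.map (Int.castRingHom (ZMod p)) with hQ
  have hQ0 : Q ≠ 0 := fun h => hlc <| (ZMod.intCast_zmod_eq_zero_iff_dvd _ p).mp <| by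
    simpa [hQ] using congrArg (coeff · P.natDegree) h
  have hroot (n : ℕ) (hn : (p : ℤ) ∣ P.eval (n : ℤ)) : (n : ZMod p) ∈ Q.roots.toFinset := by
    rw [Multiset.mem_toFinset, mem_roots hQ0, IsRoot.def, hQ, eval_natCast_map, eq_intCast,
      ZMod.intCast_zmod_eq_zero_iff_dvd]
    exact hn
  calc #((Icc 1 N).filter fun n : ℕ => (p : ℤ) ∣ P.eval (n : ℤ))
      ≤ #((Icc 1 N).filter fun n : ℕ => (n : ZMod p) ∈ Q.roots.toFinset) :=
        card_le_card (monotone_filter_right _ fun n _ => hroot n)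
    _ ≤ #Q.roots.toFinset * (N / p + 1) := card_filter_natCast_mem_le _ N
    _ ≤ P.natDegree * (N / p + 1) := by
        gcongr
        exact (Multiset.toFinset_card_le _).trans (card_roots_map_le_natDegree P)

lemma exists_eventually_forall_prime_card_filter_dvd_eval_le {P : ℤ[X]} (hP : P ≠ 0) {ε : ℝ}
    (hε : 0 < ε) :
    ∃ K : ℕ, ∀ᶠ N : ℕ in atTop, ∀ p : ℕ, p.Prime → K ≤ p →
      (#((Icc 1 N).filter fun n : ℕ => (p : ℤ) ∣ P.eval (n : ℤ)) : ℝ) ≤ ε * N := by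
  obtain ⟨k, hk⟩ := exists_nat_ge (2 * P.natDegree / ε)
  set K := max k (P.leadingCoeff.natAbs + 1)
  have hKpos : (0 : ℝ) < K := by exact_mod_cast lt_max_of_lt_right (Nat.succ_pos _)
  have hKε : 2 * P.natDegree ≤ K * ε :=
    (div_le_iff₀ hε).mp (hk.trans (by exact_mod_cast le_max_left _ _))
  refine ⟨K, (eventually_ge_atTop K).mono fun N hN p hp hKp => ?_⟩
  have hlc : ¬(p : ℤ) ∣ P.leadingCoeff := fun h => by
    have := Nat.le_of_dvd (Int.natAbs_pos.mpr (leadingCoeff_ne_zero.mpr hP))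
      (Int.natCast_dvd.mp h)
    lia
  have hNK : (1 : ℝ) ≤ N / K := (one_le_div hKpos).mpr (by exact_mod_cast hN)
  have hNp : ((N / p : ℕ) : ℝ) ≤ N / K := Nat.cast_div_le.trans (by gcongr)
  calc (#((Icc 1 N).filter fun n : ℕ => (p : ℤ) ∣ P.eval (n : ℤ)) : ℝ)
      ≤ P.natDegree * ((N / p : ℕ) + 1) := by exact_mod_cast card_filter_dvd_eval_le hp hlc N
    _ ≤ P.natDegree * (N / K + N / K) := by gcongr
    _ = 2 * P.natDegree * (N / K) := by ring
    _ ≤ K * ε * (N / K) := by gcongr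
    _ = ε * N := by field_simp

end ResidueClasses

section SmoothValues

lemma factorization_le_log_two (m p : ℕ) : m.factorization p ≤ Nat.log 2 m := by
  rcases eq_or_ne m 0 with rfl | hm
  · simp
  by_cases hp : p.Prime
  · exact Nat.le_log_of_pow_le one_lt_two
      ((Nat.pow_le_pow_left hp.two_le _).trans (Nat.ordProj_le p hm))
  · simp [Nat.factorization_eq_zero_of_not_prime m hp]

lemma card_smoothNumbersUpTo_le_log_pow (B k : ℕ) :
    #(Nat.smoothNumbersUpTo B k) ≤ (Nat.log 2 B + 1) ^ #k.primesBelow := by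
  calc #(Nat.smoothNumbersUpTo B k)
      ≤ #(Fintype.piFinset fun _ : k.primesBelow => range (Nat.log 2 B + 1)) := by
        refine card_le_card_of_injOn (fun m p => m.factorization p) (fun m hm => ?_) ?_
        · obtain ⟨hmB, -⟩ := Nat.mem_smoothNumbersUpTo.mp hm
          exact Fintype.mem_piFinset.mpr fun p => mem_range_succ_iff.mpr <|
            (factorization_le_log_two m p).trans (Nat.log_mono_right hmB)
        · intro m hm m' hm' h
          obtain ⟨-, hm⟩ := Nat.mem_smoothNumbersUpTo.mp hm
          obtain ⟨-, hm'⟩ := Nat.mem_smoothNumbersUpTo.mp hm'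
          refine Nat.eq_of_factorization_eq (Nat.ne_zero_of_mem_smoothNumbers hm)
            (Nat.ne_zero_of_mem_smoothNumbers hm') fun q => ?_
          by_cases hq : q ∈ k.primesBelow
          · exact congrFun h ⟨q, hq⟩
          · have hzero {l : ℕ} (hl : l ∈ k.smoothNumbers) : l.factorization q = 0 :=
              Finsupp.notMem_support_iff.mp fun hql =>
                hq (Nat.primeFactors_subset_of_mem_smoothNumbers hl hql)
            rw [hzero hm, hzero hm']
    _ = (Nat.log 2 B + 1) ^ #k.primesBelow := by simp

lemma card_filter_natAbs_eval_mem_smoothNumbers_le {P : ℤ[X]} (hP : 0 < P.natDegree)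
    {s : Finset ℕ} {B : ℕ} (hB : ∀ n ∈ s, (P.eval (n : ℤ)).natAbs ≤ B) (k : ℕ) :
    #(s.filter fun n : ℕ => (P.eval (n : ℤ)).natAbs ∈ k.smoothNumbers) ≤
      2 * P.natDegree * (Nat.log 2 B + 1) ^ #k.primesBelow := by
  calc #(s.filter fun n : ℕ => (P.eval (n : ℤ)).natAbs ∈ k.smoothNumbers)
      ≤ #(s.filter fun n : ℕ => (P.eval (n : ℤ)).natAbs ∈ Nat.smoothNumbersUpTo B k) :=
        card_le_card <| monotone_filter_right _ fun n hn hsmooth =>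
          Nat.mem_smoothNumbersUpTo.mpr ⟨hB n hn, hsmooth⟩
    _ ≤ 2 * P.natDegree * #(Nat.smoothNumbersUpTo B k) := card_filter_natAbs_eval_mem_le hP _ _
    _ ≤ 2 * P.natDegree * (Nat.log 2 B + 1) ^ #k.primesBelow := by
        gcongr
        exact card_smoothNumbersUpTo_le_log_pow B k

lemma isBigO_natLog_pow_add_one (b e : ℕ) :
    (fun N : ℕ => (Nat.log b (N ^ e) : ℝ) + 1) =O[atTop] fun N : ℕ => Real.log N := by
  have hone : (fun _ : ℕ => (1 : ℝ)) =O[atTop] fun N : ℕ => Real.log N :=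
    (Real.isLittleO_const_log_atTop.comp_tendsto tendsto_natCast_atTop_atTop).isBigO
  refine IsBigO.add (IsBigO.of_bound (e / Real.log b) (Eventually.of_forall fun N => ?_)) hone
  have h := Real.natLog_le_logb (N ^ e) b
  rw [Nat.cast_pow, Real.logb, Real.log_pow, mul_div_right_comm] at h
  simpa [abs_of_nonneg (Real.log_natCast_nonneg N)] using h

lemma isLittleO_card_filter_natAbs_eval_mem_smoothNumbers {P : ℤ[X]} (hP : 0 < P.natDegree)
    (k : ℕ) :
    (fun N : ℕ => (#((Icc 1 N).filter fun n : ℕ => (P.eval (n : ℤ)).natAbs ∈ k.smoothNumbers) : ℝ))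
      =o[atTop] fun N : ℕ => (N : ℝ) := by
  have hcard : (fun N : ℕ =>
      (#((Icc 1 N).filter fun n : ℕ => (P.eval (n : ℤ)).natAbs ∈ k.smoothNumbers) : ℝ)) =O[atTop]
      fun N : ℕ => 2 * P.natDegree *
        ((Nat.log 2 (N ^ (P.natDegree + 1)) : ℝ) + 1) ^ #k.primesBelow := by
    refine IsBigO.of_bound' ?_
    filter_upwards [eventually_forall_natAbs_eval_le_pow P] with N hN
    rw [Real.norm_natCast, Real.norm_of_nonneg (by positivity)]
    exact_mod_cast card_filter_natAbs_eval_mem_smoothNumbers_le hP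
      (fun n hn => hN n (mem_Icc.mp hn).2) k
  have hpolylog := ((isBigO_natLog_pow_add_one 2 (P.natDegree + 1)).pow
    #k.primesBelow).const_mul_left (2 * P.natDegree)
  have hlog : (fun N : ℕ => Real.log N ^ #k.primesBelow) =o[atTop] fun N : ℕ => (N : ℝ) :=
    Real.isLittleO_pow_log_id_atTop.comp_tendsto tendsto_natCast_atTop_atTop
  exact (hcard.trans hpolylog).trans_isLittleO hlog

end SmoothValues

namespace IsMaxPrimeFac

variable {p q k : ℕ} {m : ℤ}

lemma unique (hp : IsMaxPrimeFac p m) (hq : IsMaxPrimeFac q m) : p = q :=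
  le_antisymm (hq.2.2 p hp.1 hp.2.1) (hp.2.2 q hq.1 hq.2.1)

lemma natAbs_mem_smoothNumbers (hp : IsMaxPrimeFac p m) (hpk : p < k) :
    m.natAbs ∈ k.smoothNumbers :=
  Nat.mem_smoothNumbers'.mpr fun q hq hqm =>
    (hp.2.2 q hq (Int.natCast_dvd.mpr hqm)).trans_lt hpk

end IsMaxPrimeFac

open Classical in
/-- The set of `n ∈ {1, …, N}` for which the largest prime factor of `P n` is `p`: the sum in the
theorem runs over the squared cardinalities of these sets. -/
noncomputable def maxPrimeFacFiber (P : ℤ[X]) (N p : ℕ) : Finset ℕ :=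
  {n ∈ Icc 1 N | IsMaxPrimeFac p (P.eval (n : ℤ))}

lemma mem_maxPrimeFacFiber {P : ℤ[X]} {N p n : ℕ} :
    n ∈ maxPrimeFacFiber P N p ↔ n ∈ Icc 1 N ∧ IsMaxPrimeFac p (P.eval (n : ℤ)) := by
  classical exact mem_filter

lemma pairwise_disjoint_maxPrimeFacFiber (P : ℤ[X]) (N : ℕ) :
    Pairwise (Function.onFun Disjoint (maxPrimeFacFiber P N)) := fun _ _ hpq =>
  disjoint_left.mpr fun _ hp hq =>
    hpq ((mem_maxPrimeFacFiber.mp hp).2.unique (mem_maxPrimeFacFiber.mp hq).2)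

lemma eventually_forall_card_maxPrimeFacFiber_le {P : ℤ[X]} (hP : 0 < P.natDegree) {ε : ℝ}
    (hε : 0 < ε) : ∀ᶠ N : ℕ in atTop, ∀ p, (#(maxPrimeFacFiber P N p) : ℝ) ≤ ε * N := by
  obtain ⟨K, hK⟩ := exists_eventually_forall_prime_card_filter_dvd_eval_le
    (ne_zero_of_natDegree_gt hP) hε
  filter_upwards [hK, (isLittleO_card_filter_natAbs_eval_mem_smoothNumbers hP K).bound hε]
    with N hlarge hsmooth p
  rw [Real.norm_natCast, Real.norm_natCast] at hsmooth
  by_cases hp : p.Prime ∧ K ≤ p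
  · refine le_trans ?_ (hlarge p hp.1 hp.2)
    gcongr
    intro n hn
    obtain ⟨hnN, -, hdvd, -⟩ := mem_maxPrimeFacFiber.mp hn
    exact mem_filter.mpr ⟨hnN, hdvd⟩
  · refine le_trans ?_ hsmooth
    gcongr
    intro n hn
    obtain ⟨hnN, hmax⟩ := mem_maxPrimeFacFiber.mp hn
    exact mem_filter.mpr ⟨hnN, hmax.natAbs_mem_smoothNumbers (not_le.mp fun h => hp ⟨hmax.1, h⟩)⟩

lemma tsum_sq_card_le_of_pairwise_disjoint {ι α : Type*} {A : ι → Finset α} {S : Finset α}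
    (hdisj : Pairwise (Function.onFun Disjoint A)) (hsub : ∀ i, A i ⊆ S) {M : ℝ} (hM : 0 ≤ M)
    (hcard : ∀ i, (#(A i) : ℝ) ≤ M) : ∑' i, (#(A i) : ℝ) ^ 2 ≤ M * #S := by
  classical
  refine Real.tsum_le_of_sum_le (fun i => sq_nonneg _) fun s => ?_
  have hsum : ∑ i ∈ s, #(A i) ≤ #S := by
    rw [← card_biUnion (hdisj.set_pairwise _)]
    exact card_le_card (biUnion_subset.mpr fun i _ => hsub i)
  calc ∑ i ∈ s, (#(A i) : ℝ) ^ 2 ≤ ∑ i ∈ s, M * #(A i) :=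
        sum_le_sum fun i _ => by rw [sq]; gcongr; exact hcard i
    _ = M * (∑ i ∈ s, #(A i) : ℕ) := by rw [Nat.cast_sum, mul_sum]
    _ ≤ M * #S := by gcongr

theorem sum_sq_count_max_prime_factor_o_general (P : ℤ[X]) (hP : 0 < P.natDegree) :
    ∀ ε : ℝ, 0 < ε → ∃ N₀ : ℕ, ∀ N : ℕ, N₀ ≤ N →
      ∑' p : {p : ℕ // p.Prime},
        (({n : ℕ | 1 ≤ n ∧ n ≤ N ∧ IsMaxPrimeFac (p : ℕ) (P.eval (n : ℤ))}.ncard : ℝ))^2 ≤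
        ε * (N : ℝ)^2 := by
  intro ε hε
  obtain ⟨N₀, hN₀⟩ := eventually_atTop.mp (eventually_forall_card_maxPrimeFacFiber_le hP hε)
  refine ⟨N₀, fun N hN => ?_⟩
  have hncard (p : ℕ) : {n : ℕ | 1 ≤ n ∧ n ≤ N ∧ IsMaxPrimeFac p (P.eval (n : ℤ))}.ncard =
      #(maxPrimeFacFiber P N p) := by
    rw [← Set.ncard_coe_finset]
    congr 1 with n
    simp [mem_maxPrimeFacFiber, and_assoc]
  have hbound := tsum_sq_card_le_of_pairwise_disjoint
    (A := fun p : {p : ℕ // p.Prime} => maxPrimeFacFiber P N p) (S := Icc 1 N)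
    ((pairwise_disjoint_maxPrimeFacFiber P N).comp_of_injective Subtype.val_injective)
    (fun _ _ hn => (mem_maxPrimeFacFiber.mp hn).1) (by positivity) fun p => hN₀ N hN p
  simpa only [hncard, Nat.card_Icc, add_tsub_cancel_right, mul_assoc, ← sq] using hbound

/-- For `P` admissible and either an irreducible quadratic or a product of at least two
pairwise non-proportional linear factors, with `P(n) ≥ 2` for `n ≥ 1`, we have
`∑_p #{n ≤ N : P⁺(P(n)) = p}² = o(N²)` as `N → ∞`. -/
theorem sum_sq_count_max_prime_factor_o
    (P : Polynomial ℤ)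
    (hP : (∃ k : ℕ, 2 ≤ k ∧ ∃ a b : Fin k → ℤ, (∀ i, a i ≠ 0) ∧
            P = ∏ i, (Polynomial.C (a i) * Polynomial.X + Polynomial.C (b i)) ∧
            ∀ i j, i ≠ j → a i * b j - a j * b i ≠ 0) ∨
          (P.natDegree = 2 ∧ Irreducible P))
    (hadm : ¬ ∃ p : ℕ, p.Prime ∧ ∀ n : ℕ, 0 < n → (p : ℤ)^2 ∣ P.eval (n : ℤ))
    (hpos : ∀ n : ℕ, 0 < n → 2 ≤ P.eval (n : ℤ)) :
    ∀ ε : ℝ, 0 < ε → ∃ N₀ : ℕ, ∀ N : ℕ, N₀ ≤ N →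
      ∑' p : {p : ℕ // p.Prime},
        (({n : ℕ | 1 ≤ n ∧ n ≤ N ∧ IsMaxPrimeFac (p : ℕ) (P.eval (n : ℤ))}.ncard : ℝ))^2 ≤
        ε * (N : ℝ)^2 := by
  refine sum_sq_count_max_prime_factor_o_general P ?_
  rcases hP with ⟨k, hk, a, b, ha, rfl, -⟩ | ⟨hdeg, -⟩
  · rw [natDegree_prod_linear _ b fun i _ => ha i, card_univ, Fintype.card_fin]
    lia
  · lia
end

section
/- Let P ∈ ℤ[x] be a polynomial that is either an irreducible quadratic or a product of at least two pairwise non-proportional linear factors a_i x + b_i over ℤ (i.e. a_i b_j − a_j b_i ≠ 0 for i ≠ j), assume P is admissible, and assume P(n) ≥ 2 for all positive integers n. Then #{(m₁,m₂,n₁,n₂) ∈ [1,N]⁴ : m₁ ≠ m₂, n₁ ≠ n₂, each of P(m₁), P(m₂), P(n₁), P(n₂) is squarefree, the largest prime factor of P(m₁) equals that of P(m₂), the largest prime factor of P(n₁) equals that of P(n₂), and P(m₁)P(m₂)P(n₁)P(n₂) is a perfect square} = o(N²) as N → ∞. -/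
/-!
Suppose first that the four points are distinct, and let `x` be the largest. Since the product of
the four squarefree values is a square, `P(x)` divides the product of its gcds with the other three
values, so `x ^ 2` is at most a constant times that product. If the two largest of these gcds are
jointly large compared with `x`, then the divisor bound and the bounded number of roots of `P`
modulo a prime leave few choices for the corresponding points `y`, `z`, and the fourth point is
determined up to `O(1)` choices by the squareclass of the product.

Otherwise one gcd is nearly as large as `P(x)`, so `t P(x) = s P(y)` with `s`, `t` small and
squarefree. With `d = deg P ≥ 2` and a suitable shift `h`, write
`P(n) = a (n + h) ^ d + O(n ^ (d - 2))` and `l = (s / t) ^ (1 / d)`; then `x + h - l (y + h)` is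
`O(1 / x)` up to powers of `s`, `t`. Subtracting this for two such pairs gives a good approximation
of `l` by a rational number whose numerator is the gap `x' - x`. For `s ≠ t` the number `l` is
irrational and the gap must be large, so such `x` are sparse; for `s = t` the estimate bounds `x`
outright.

If the four points are not distinct, then `{P(m₁), P(m₂)} = {P(n₁), P(n₂)}` up to sign, and it
suffices that only `o(N²)` pairs have values with the same largest prime factor `p`: for `p ≤ K` the
value `P(m₁)` divides `K!`, and each `m₁` with `p > K` has only `O(N / K + 1)` partners `m₂`.
-/

section

open Finset Filter Asymptotics Polynomial

/-! ### Squarefree numbers and counting -/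

theorem eq_of_squarefree_of_mul_pow_eq_mul_pow {d s t k l : ℕ} (hd : 2 ≤ d) (hs : Squarefree s)
    (ht : Squarefree t) (hk : k ≠ 0) (h : t * k ^ d = s * l ^ d) : s = t := by
  have hl : l ≠ 0 := by
    rintro rfl
    rw [zero_pow (by omega), mul_zero] at h
    exact mul_ne_zero ht.ne_zero (pow_ne_zero d hk) h
  refine Nat.eq_of_factorization_eq hs.ne_zero ht.ne_zero fun p => ?_
  have hval := DFunLike.congr_fun (congrArg Nat.factorization h) p
  simp only [Nat.factorization_mul hs.ne_zero (pow_ne_zero d hl),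
    Nat.factorization_mul ht.ne_zero (pow_ne_zero d hk), Nat.factorization_pow,
    Finsupp.add_apply, Finsupp.smul_apply, smul_eq_mul] at hval
  have hmod := congrArg (· % d) hval
  simp only [Nat.add_mul_mod_self_left] at hmod
  have hs_le := hs.natFactorization_le_one p
  have ht_le := ht.natFactorization_le_one p
  rwa [Nat.mod_eq_of_lt (by omega), Nat.mod_eq_of_lt (by omega), eq_comm] at hmod

theorem eq_of_squarefree_of_isSquare_mul {a u v : ℕ} (ha : a ≠ 0) (hu : Squarefree u)
    (hv : Squarefree v) (hau : IsSquare (a * u)) (hav : IsSquare (a * v)) : u = v := by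
  obtain ⟨i, hi⟩ := hau
  obtain ⟨j, hj⟩ := hav
  have hi0 : i ≠ 0 := fun h => mul_ne_zero ha hu.ne_zero (by rw [hi, h, zero_mul])
  refine eq_of_squarefree_of_mul_pow_eq_mul_pow le_rfl hu hv hi0 (l := j) ?_
  rw [sq, sq, ← hi, ← hj]
  ring

theorem dvd_of_squarefree_of_isSquare_mul {a b : ℕ} (ha : Squarefree a)
    (hab : IsSquare (a * b)) : a ∣ b := by
  obtain ⟨k, hk⟩ := hab
  obtain ⟨j, rfl⟩ := (ha.dvd_pow_iff_dvd two_ne_zero).1 (Dvd.intro b (hk.trans (sq k).symm))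
  exact ⟨j * j, Nat.eq_of_mul_eq_mul_left (Nat.pos_of_ne_zero ha.ne_zero) (by rw [hk]; ring)⟩

theorem pow_card_primeFactors_le_mul {b n : ℕ} (hb : 1 ≤ b) (hn : Squarefree n) :
    b ^ #n.primeFactors ≤ b ^ b * n := by
  rw [← card_filter_add_card_filter_not (s := n.primeFactors) (· < b), pow_add]
  refine Nat.mul_le_mul (Nat.pow_le_pow_right hb ?_) ?_
  · calc #{p ∈ n.primeFactors | p < b} ≤ #(range b) :=
          card_le_card fun p hp => mem_range.2 (mem_filter.1 hp).2
      _ = b := card_range b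
  · calc b ^ #{p ∈ n.primeFactors | ¬ p < b} ≤ ∏ p ∈ n.primeFactors with ¬ p < b, p :=
          pow_card_le_prod _ _ _ fun p hp => not_lt.1 (mem_filter.1 hp).2
      _ ≤ ∏ p ∈ n.primeFactors, p :=
          prod_le_prod_of_subset_of_one_le' (filter_subset _ _) fun p hp _ =>
            (Nat.prime_of_mem_primeFactors hp).one_le
      _ = n := Nat.prod_primeFactors_of_squarefree hn

theorem card_divisors_of_squarefree {n : ℕ} (hn : Squarefree n) :
    #n.divisors = 2 ^ #n.primeFactors := by
  rw [Nat.card_divisors hn.ne_zero, ← prod_const]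
  refine prod_congr rfl fun p hp => ?_
  rw [Nat.factorization_eq_one_of_squarefree hn (Nat.prime_of_mem_primeFactors hp)
    (Nat.dvd_of_mem_primeFactors hp)]

theorem card_le_div_add_one_of_separated {A : Finset ℕ} {N G : ℕ} (hG : G ≠ 0)
    (hA : ∀ x ∈ A, x ≤ N) (hsep : ∀ x ∈ A, ∀ y ∈ A, x < y → G ≤ y - x) :
    #A ≤ N / G + 1 := by
  have hdiv : ∀ x ∈ A, ∀ y ∈ A, x < y → x / G ≠ y / G := fun x hx y hy hxy => by
    have hle : x + G ≤ y := by have := hsep x hx y hy hxy; omega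
    have := Nat.div_le_div_right (c := G) hle
    rw [Nat.add_div_right x (Nat.pos_of_ne_zero hG)] at this
    omega
  rw [← card_range (N / G + 1)]
  refine card_le_card_of_injOn (· / G)
    (fun x hx => mem_range.2 (Nat.lt_succ_of_le (Nat.div_le_div_right (hA x hx)))) ?_
  intro x hx y hy hxy
  by_contra hne
  rcases lt_or_gt_of_ne hne with hlt | hgt
  · exact hdiv x hx y hy hlt hxy
  · exact hdiv y hy x hx hgt hxy.symm

theorem exists_perm_last_eq_and_monotone {α : Type*} [LinearOrder α] {n : ℕ}
    (κ : Fin (n + 1) → α) (i : Fin (n + 1)) :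
    ∃ σ : Equiv.Perm (Fin (n + 1)), σ (Fin.last n) = i ∧
      Monotone fun j : Fin n => κ (σ j.castSucc) := by
  let key : Fin (n + 1) → WithTop α := fun j => if j = i then ⊤ else κ j
  have hmono : Monotone (key ∘ Tuple.sort key) := Tuple.monotone_sort key
  have key_eq_top : ∀ j, key j = ⊤ → j = i := fun j hj => by
    by_contra hne
    simp [key, hne] at hj
  have hlast : Tuple.sort key (Fin.last n) = i := by
    refine key_eq_top _ (top_le_iff.1 ?_)
    have := hmono (Fin.le_last ((Tuple.sort key).symm i))
    simpa [key] using this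
  have hne : ∀ j : Fin n, Tuple.sort key j.castSucc ≠ i := fun j hj =>
    j.castSucc_lt_last.ne ((Tuple.sort key).injective (hj.trans hlast.symm))
  refine ⟨Tuple.sort key, hlast, fun j k hjk => ?_⟩
  simpa [key, hne] using hmono (Fin.castSucc_le_castSucc_iff.2 hjk)

theorem card_le_factorial_mul_card_filter {ι α : Type*} [Fintype ι] {S : Finset (ι → α)}
    {Q : (ι → α) → Prop} [DecidablePred Q] (hS : ∀ v ∈ S, ∀ σ : Equiv.Perm ι, v ∘ σ ∈ S)
    (hQ : ∀ v ∈ S, ∃ σ : Equiv.Perm ι, Q (v ∘ σ)) :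
    #S ≤ (Fintype.card ι).factorial * #{v ∈ S | Q v} := by
  classical
  rw [← Fintype.card_perm, ← card_univ, ← card_product]
  refine card_le_card_of_surjOn (fun w => w.2 ∘ w.1) fun v hv => ?_
  obtain ⟨σ, hσ⟩ := hQ v hv
  exact ⟨(σ.symm, v ∘ σ), by simpa using ⟨hS v hv σ, hσ⟩, by ext; simp⟩

/-! ### Values of an integer polynomial -/

/-- The absolute value `|P(n)|` as a natural number; all counting is done with these values. -/
def absEval (P : ℤ[X]) (n : ℕ) : ℕ := (P.eval (n : ℤ)).natAbs

/-- A bound, uniform in the prime `p`, for the number of roots of `P` modulo `p`; the leading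
coefficient accounts for the primes modulo which `P` vanishes identically. -/
def rootBound (P : ℤ[X]) : ℕ := P.natDegree + P.leadingCoeff.natAbs

variable {P : ℤ[X]}

theorem abs_eval_eq_absEval (P : ℤ[X]) (n : ℕ) :
    |(P.map (Int.castRingHom ℝ)).eval (n : ℝ)| = absEval P n := by
  rw [absEval, Nat.cast_natAbs, Int.cast_abs]
  congr 1
  simp

theorem one_le_rootBound (hP : P ≠ 0) : 1 ≤ rootBound P :=
  le_add_left (Int.natAbs_pos.2 (leadingCoeff_ne_zero.2 hP))

theorem dvd_absEval_iff_of_modEq {m n r : ℕ} (h : n ≡ r [MOD m]) :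
    m ∣ absEval P n ↔ m ∣ absEval P r := by
  have hsub : (m : ℤ) ∣ P.eval (r : ℤ) - P.eval (n : ℤ) :=
    (Nat.modEq_iff_dvd.1 h).trans (sub_dvd_eval_sub _ _ P)
  rw [absEval, absEval, ← Int.natCast_dvd, ← Int.natCast_dvd]
  exact (dvd_iff_dvd_of_dvd_sub hsub).symm

theorem card_roots_mod_prime_le (hP : P ≠ 0) {p : ℕ} (hp : p.Prime) :
    #{r ∈ range p | p ∣ absEval P r} ≤ rootBound P := by
  have := Fact.mk hp
  by_cases hmap : P.map (Int.castRingHom (ZMod p)) = 0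
  · have hlc : (p : ℤ) ∣ P.leadingCoeff := by
      have := congrArg (coeff · P.natDegree) hmap
      exact (ZMod.intCast_zmod_eq_zero_iff_dvd _ _).1 (by simpa using this)
    calc #{r ∈ range p | p ∣ absEval P r} ≤ #(range p) := card_filter_le _ _
      _ = p := card_range p
      _ ≤ P.leadingCoeff.natAbs :=
          Nat.le_of_dvd (Int.natAbs_pos.2 (leadingCoeff_ne_zero.2 hP)) (Int.natCast_dvd.1 hlc)
      _ ≤ rootBound P := Nat.le_add_left _ _
  · have hroots : ∀ r ∈ ({r ∈ range p | p ∣ absEval P r} : Finset ℕ),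
        (r : ZMod p) ∈ (P.map (Int.castRingHom (ZMod p))).roots.toFinset := fun r hr => by
      have hdvd : ((P.eval (r : ℤ) : ℤ) : ZMod p) = 0 :=
        (ZMod.intCast_zmod_eq_zero_iff_dvd _ _).2 (Int.natCast_dvd.2 (mem_filter.1 hr).2)
      simp [hmap, hdvd]
    have hinj : Set.InjOn (fun r : ℕ => (r : ZMod p))
        ({r ∈ range p | p ∣ absEval P r} : Finset ℕ) := fun r hr s hs hrs => by
      have := (ZMod.natCast_eq_natCast_iff' _ _ _).1 hrs
      rwa [Nat.mod_eq_of_lt (mem_range.1 (mem_filter.1 hr).1),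
        Nat.mod_eq_of_lt (mem_range.1 (mem_filter.1 hs).1)] at this
    calc #{r ∈ range p | p ∣ absEval P r}
        ≤ #(P.map (Int.castRingHom (ZMod p))).roots.toFinset :=
          card_le_card_of_injOn _ hroots hinj
      _ ≤ (P.map (Int.castRingHom (ZMod p))).natDegree :=
          (Multiset.toFinset_card_le _).trans (card_roots' _)
      _ ≤ P.natDegree := natDegree_map_le
      _ ≤ rootBound P := Nat.le_add_right _ _

theorem modEq_of_squarefree_of_forall_prime {g m n : ℕ} (hg : Squarefree g)
    (h : ∀ p ∈ g.primeFactors, m ≡ n [MOD p]) : m ≡ n [MOD g] := by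
  rw [Nat.modEq_iff_dvd, ← Nat.prod_primeFactors_of_squarefree hg, Nat.cast_prod]
  refine Finset.prod_dvd_of_coprime (fun p hp q hq hpq => ?_)
    fun p hp => Nat.modEq_iff_dvd.1 (h p hp)
  exact Nat.isCoprime_iff_coprime.2 ((Nat.coprime_primes (Nat.prime_of_mem_primeFactors hp)
    (Nat.prime_of_mem_primeFactors hq)).2 hpq)

theorem card_roots_mod_le (hP : P ≠ 0) {g : ℕ} (hg : Squarefree g) :
    #{r ∈ range g | g ∣ absEval P r} ≤ rootBound P ^ #g.primeFactors := by
  let residues : ℕ → ∀ p ∈ g.primeFactors, ℕ := fun r p _ => r % p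
  calc #{r ∈ range g | g ∣ absEval P r}
      ≤ #(g.primeFactors.pi fun p => {r ∈ range p | p ∣ absEval P r}) := by
        refine card_le_card_of_injOn residues (fun r hr => ?_) fun r hr s hs hrs => ?_
        · refine mem_pi.2 fun p hp => mem_filter.2 ⟨mem_range.2 ?_, ?_⟩
          · exact Nat.mod_lt _ (Nat.prime_of_mem_primeFactors hp).pos
          · rw [dvd_absEval_iff_of_modEq (Nat.mod_modEq r p)]
            exact (Nat.dvd_of_mem_primeFactors hp).trans (mem_filter.1 hr).2
        · refine (modEq_of_squarefree_of_forall_prime hg fun p hp => ?_).eq_of_lt_of_lt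
            (mem_range.1 (mem_filter.1 hr).1) (mem_range.1 (mem_filter.1 hs).1)
          exact congrFun (congrFun hrs p) hp
    _ = ∏ p ∈ g.primeFactors, #{r ∈ range p | p ∣ absEval P r} := card_pi _ _
    _ ≤ rootBound P ^ #g.primeFactors :=
        prod_le_pow_card _ _ _ fun p hp =>
          card_roots_mod_prime_le hP (Nat.prime_of_mem_primeFactors hp)

theorem card_dvd_absEval_le (hP : P ≠ 0) {g : ℕ} (hg : Squarefree g) (M : ℕ) :
    #{n ∈ Icc 1 M | g ∣ absEval P n} ≤ rootBound P ^ #g.primeFactors * (M / g + 1) := by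
  have hg0 : 0 < g := Nat.pos_of_ne_zero hg.ne_zero
  calc #{n ∈ Icc 1 M | g ∣ absEval P n}
      ≤ #({r ∈ range g | g ∣ absEval P r} ×ˢ range (M / g + 1)) := by
        refine card_le_card_of_injOn (fun n => (n % g, n / g)) (fun n hn => ?_) ?_
        · simp only [coe_filter, mem_Icc, Set.mem_ofPred_eq] at hn
          simp only [coe_product, Set.mem_prod, coe_filter, mem_range, Set.mem_ofPred_eq,
            coe_range, Set.mem_Iio]
          exact ⟨⟨Nat.mod_lt n hg0, (dvd_absEval_iff_of_modEq (Nat.mod_modEq n g)).2 hn.2⟩,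
            Nat.lt_succ_of_le (Nat.div_le_div_right hn.1.2)⟩
        · intro m _ n _ hmn
          obtain ⟨hmod, hdiv⟩ := Prod.mk.inj hmn
          rw [← Nat.div_add_mod m g, ← Nat.div_add_mod n g, hmod, hdiv]
    _ ≤ rootBound P ^ #g.primeFactors * (M / g + 1) := by
        rw [card_product, card_range]
        exact Nat.mul_le_mul_right _ (card_roots_mod_le hP hg)

theorem card_absEval_eq_le (hd : 0 < P.natDegree) (s : Finset ℕ) (v : ℕ) :
    #{n ∈ s | absEval P n = v} ≤ 2 * P.natDegree := by
  have hdeg : (P ^ 2 - C ((v : ℤ) ^ 2)).natDegree = 2 * P.natDegree := by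
    rw [natDegree_sub_C, natDegree_pow]
  have hne : P ^ 2 - C ((v : ℤ) ^ 2) ≠ 0 := by
    intro h
    rw [h, natDegree_zero] at hdeg
    omega
  calc #{n ∈ s | absEval P n = v} ≤ #(P ^ 2 - C ((v : ℤ) ^ 2)).roots.toFinset := by
        refine card_le_card_of_injOn (fun n : ℕ => (n : ℤ)) (fun n hn => ?_)
          Nat.cast_injective.injOn
        rw [mem_coe, Multiset.mem_toFinset, mem_roots hne, IsRoot, eval_sub, eval_pow, eval_C,
          ← (mem_filter.1 hn).2, absEval, Int.natAbs_sq, sub_self]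
    _ ≤ (P ^ 2 - C ((v : ℤ) ^ 2)).natDegree :=
        (Multiset.toFinset_card_le _).trans (card_roots' _)
    _ = 2 * P.natDegree := hdeg

/-! ### Approximation by a shifted power -/

theorem exists_abs_eval_natCast_le {R Q : ℝ[X]} (h : R.degree ≤ Q.degree) :
    ∃ C : ℝ, 1 ≤ C ∧ ∀ n : ℕ, Q.eval (n : ℝ) ≠ 0 → |R.eval (n : ℝ)| ≤ C * |Q.eval (n : ℝ)| := by
  obtain ⟨C, -, hC⟩ := bound_of_isBigO_nat_atTop
    ((isBigO_atTop_of_degree_le R Q h).comp_tendsto tendsto_natCast_atTop_atTop)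
  exact ⟨max C 1, le_max_right _ _, fun n hn => (hC hn).trans
    (mul_le_mul_of_nonneg_right (le_max_left _ _) (abs_nonneg _))⟩

theorem exists_pow_le_mul_absEval (hP : P ≠ 0) :
    ∃ c : ℝ, 1 ≤ c ∧ ∀ n : ℕ, absEval P n ≠ 0 → (n : ℝ) ^ P.natDegree ≤ c * absEval P n := by
  obtain ⟨c, hc, hbound⟩ := exists_abs_eval_natCast_le (R := X ^ P.natDegree)
    (Q := P.map (Int.castRingHom ℝ)) (by
      rw [degree_X_pow, degree_map_eq_of_injective Int.cast_injective, degree_eq_natDegree hP])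
  refine ⟨c, hc, fun n hn => ?_⟩
  have := hbound n (abs_ne_zero.1 (by rw [abs_eval_eq_absEval]; exact_mod_cast hn))
  rwa [abs_eval_eq_absEval, eval_pow, eval_X, abs_of_nonneg (by positivity)] at this

theorem exists_absEval_le_mul_pow (P : ℤ[X]) :
    ∃ C : ℝ, 1 ≤ C ∧ ∀ n : ℕ, n ≠ 0 → (absEval P n : ℝ) ≤ C * (n : ℝ) ^ P.natDegree := by
  obtain ⟨C, hC, hbound⟩ := exists_abs_eval_natCast_le (R := P.map (Int.castRingHom ℝ))
    (Q := X ^ P.natDegree) (by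
      rw [degree_X_pow]; exact degree_map_le.trans degree_le_natDegree)
  refine ⟨C, hC, fun n hn => ?_⟩
  have := hbound n (by simpa using fun h => absurd h hn)
  rwa [abs_eval_eq_absEval, eval_pow, eval_X, abs_of_nonneg (by positivity)] at this

/-- `|P(n)|` is the shifted pure power `|a|·|n + h|^d`, with `a` and `d` the leading coefficient and
degree of `P`, up to an error `C·n^(d-2)`. The natural subtraction `d - 2` is harmless as the notion
is only used for `d ≥ 2`. -/
def IsShiftedPowApprox (P : ℤ[X]) (h C : ℝ) : Prop :=
  1 ≤ C ∧ ∀ n : ℕ, n ≠ 0 →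
    |(absEval P n : ℝ) - |(P.leadingCoeff : ℝ)| * |(n : ℝ) + h| ^ P.natDegree| ≤
      C * (n : ℝ) ^ (P.natDegree - 2)

-- The shift `h` is chosen to match the coefficient of degree `d - 1` as well.
theorem exists_natDegree_sub_shifted_pow_le (R : ℝ[X]) (hd : 2 ≤ R.natDegree) :
    ∃ h : ℝ, (R - C R.leadingCoeff * (X + C h) ^ R.natDegree).natDegree ≤ R.natDegree - 2 := by
  set d := R.natDegree with hd_def
  have hlc : R.leadingCoeff ≠ 0 := leadingCoeff_ne_zero.2 (by rintro rfl; simp at hd_def; omega)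
  refine ⟨R.coeff (d - 1) / (d * R.leadingCoeff), natDegree_le_iff_coeff_eq_zero.2 fun k hk => ?_⟩
  rw [coeff_sub, coeff_C_mul, coeff_X_add_C_pow, sub_eq_zero]
  rcases (by omega : k = d - 1 ∨ k = d ∨ d < k) with rfl | rfl | hdk
  · have hchoose : d.choose (d - 1) = d := by
      rw [Nat.choose_symm (by omega : 1 ≤ d), Nat.choose_one_right]
    rw [hchoose, show d - (d - 1) = 1 by omega, pow_one]
    field_simp
  · simp [hd_def]
  · rw [coeff_eq_zero_of_natDegree_lt hdk, Nat.choose_eq_zero_of_lt hdk]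
    simp

theorem exists_isShiftedPowApprox (hd : 2 ≤ P.natDegree) :
    ∃ h C : ℝ, IsShiftedPowApprox P h C := by
  set R : ℝ[X] := P.map (Int.castRingHom ℝ) with hR
  have hRd : R.natDegree = P.natDegree := natDegree_map_eq_of_injective Int.cast_injective P
  have hRlc : R.leadingCoeff = P.leadingCoeff := by
    simpa using leadingCoeff_map_of_injective (f := Int.castRingHom ℝ) Int.cast_injective P
  obtain ⟨h, hh⟩ := exists_natDegree_sub_shifted_pow_le R (hRd ▸ hd)
  rw [hRd, hRlc] at hh
  obtain ⟨C₀, hC, hbound⟩ := exists_abs_eval_natCast_le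
    ((degree_le_of_natDegree_le hh).trans (degree_X_pow (P.natDegree - 2)).ge)
  refine ⟨h, C₀, hC, fun n hn => ?_⟩
  have hbn := hbound n (by simpa using fun h => absurd h hn)
  rw [eval_sub, eval_mul, eval_C, eval_pow, eval_add, eval_X, eval_C, eval_pow, eval_X,
    abs_of_nonneg (by positivity : 0 ≤ (n : ℝ) ^ (P.natDegree - 2))] at hbn
  rw [← abs_eval_eq_absEval, ← hR, ← abs_pow, ← abs_mul]
  exact (abs_abs_sub_abs_le _ _).trans hbn

theorem pow_mul_abs_sub_le {x y : ℝ} (hx : 0 ≤ x) (hy : 0 ≤ y) (n : ℕ) :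
    x ^ n * |x - y| ≤ |x ^ (n + 1) - y ^ (n + 1)| := by
  rw [pow_succ, pow_succ]
  rcases le_total y x with hyx | hxy
  · have : y ^ n * y ≤ x ^ n * y := by gcongr
    rw [abs_of_nonneg (sub_nonneg.2 hyx)]
    exact le_trans (by linarith) (le_abs_self _)
  · have : x ^ n * y ≤ y ^ n * y := by gcongr
    rw [abs_of_nonpos (sub_nonpos.2 hxy)]
    exact le_trans (by linarith) (neg_le_abs _)

/-! ### Separation of the pairs with a given value ratio -/

theorem pow_mul_abs_sub_mul_le_of_approx {a x y l u v E : ℝ} {n : ℕ} (ha : 1 ≤ a) (hx : 0 ≤ x)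
    (hy : 0 ≤ y) (hl : 0 ≤ l) (hu : |u - a * x ^ (n + 1)| ≤ E) (hv : |v - a * y ^ (n + 1)| ≤ E)
    (huv : u = l ^ (n + 1) * v) :
    x ^ n * |x - l * y| ≤ (1 + l ^ (n + 1)) * E := by
  have hdiff : a * (x ^ (n + 1) - (l * y) ^ (n + 1)) =
      l ^ (n + 1) * (v - a * y ^ (n + 1)) - (u - a * x ^ (n + 1)) := by
    rw [huv]; ring
  calc x ^ n * |x - l * y| ≤ |x ^ (n + 1) - (l * y) ^ (n + 1)| :=
        pow_mul_abs_sub_le hx (mul_nonneg hl hy) n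
    _ ≤ a * |x ^ (n + 1) - (l * y) ^ (n + 1)| := le_mul_of_one_le_left (abs_nonneg _) ha
    _ = |l ^ (n + 1) * (v - a * y ^ (n + 1)) - (u - a * x ^ (n + 1))| := by
        rw [← hdiff, abs_mul, abs_of_nonneg (zero_le_one.trans ha)]
    _ ≤ l ^ (n + 1) * |v - a * y ^ (n + 1)| + |u - a * x ^ (n + 1)| := by
        refine (abs_sub _ _).trans_eq ?_
        rw [abs_mul, abs_of_nonneg (by positivity : 0 ≤ l ^ (n + 1))]
    _ ≤ l ^ (n + 1) * E + E := by gcongr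
    _ = (1 + l ^ (n + 1)) * E := by ring

theorem mul_abs_sub_mul_le_of_isShiftedPowApprox {h C l S : ℝ} {x y : ℕ} (hd : 2 ≤ P.natDegree)
    (happ : IsShiftedPowApprox P h C) (hy : y ≠ 0) (hhy : 2 * |h| ≤ y) (hyx : y ≤ x)
    (hl : 0 ≤ l) (hlS : l ^ P.natDegree ≤ S) (hS : 1 ≤ S)
    (heq : (absEval P x : ℝ) = l ^ P.natDegree * absEval P y) :
    x * |((x : ℝ) + h) - l * (y + h)| ≤ 2 ^ P.natDegree * C * S := by
  obtain ⟨hC, happ⟩ := happ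
  obtain ⟨e, he⟩ : ∃ e, P.natDegree = e + 2 := ⟨P.natDegree - 2, by omega⟩
  rw [he] at hlS heq happ ⊢
  have ha : 1 ≤ |(P.leadingCoeff : ℝ)| := by
    exact_mod_cast Int.one_le_abs (leadingCoeff_ne_zero.2 fun h0 => by simp [h0] at hd)
  have hyx' : (y : ℝ) ≤ x := by exact_mod_cast hyx
  have hx0 : (0 : ℝ) < x := by exact_mod_cast (Nat.pos_of_ne_zero hy).trans_le hyx
  have hh := neg_abs_le h
  have hxh : (x : ℝ) / 2 ≤ x + h := by linarith
  have hyh : 0 ≤ (y : ℝ) + h := by linarith [abs_nonneg h]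
  have happx := happ x (by omega)
  have happy := (happ y hy).trans (by gcongr : C * (y : ℝ) ^ e ≤ C * (x : ℝ) ^ e)
  rw [abs_of_nonneg (by linarith : 0 ≤ (x : ℝ) + h)] at happx
  rw [abs_of_nonneg hyh] at happy
  have hmain := pow_mul_abs_sub_mul_le_of_approx ha (by linarith) hyh hl happx happy heq
  set q := |((x : ℝ) + h) - l * (y + h)|
  refine le_of_mul_le_mul_left (a := (x : ℝ) ^ e) ?_ (by positivity)
  calc (x : ℝ) ^ e * (x * q) = 2 ^ (e + 1) * (((x : ℝ) / 2) ^ (e + 1) * q) := by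
        rw [div_pow]; field_simp; ring
    _ ≤ 2 ^ (e + 1) * (((x : ℝ) + h) ^ (e + 1) * q) := by gcongr
    _ ≤ 2 ^ (e + 1) * ((1 + l ^ (e + 2)) * (C * (x : ℝ) ^ e)) :=
        mul_le_mul_of_nonneg_left hmain (by positivity)
    _ ≤ 2 ^ (e + 1) * ((S + S) * (C * (x : ℝ) ^ e)) := by gcongr
    _ = (x : ℝ) ^ e * (2 ^ (e + 2) * C * S) := by ring

theorem one_le_mul_abs_sub_mul_of_squarefree {d s t : ℕ} {k m : ℤ} {l : ℝ} (hd : 2 ≤ d)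
    (hs : Squarefree s) (ht : Squarefree t) (hst : s ≠ t) (hk : 0 < k)
    (hl : t * l ^ d = s) (hkl : |k - l * m| ≤ 1) :
    1 ≤ t * (|k - l * m| * d * (2 * (k : ℝ)) ^ (d - 1)) := by
  have hk1 : (1 : ℝ) ≤ k := by exact_mod_cast hk
  have hne : (t : ℤ) * k ^ d - s * m ^ d ≠ 0 := fun h => hst <| by
    refine eq_of_squarefree_of_mul_pow_eq_mul_pow hd hs ht (Int.natAbs_ne_zero.2 hk.ne')
      (l := m.natAbs) ?_
    simpa [Int.natAbs_mul, Int.natAbs_pow] using congrArg Int.natAbs (sub_eq_zero.1 h)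
  have hmax : max |(k : ℝ)| |l * m| ≤ 2 * k := by
    rw [abs_of_pos (by linarith)]
    have := (abs_sub_abs_le_abs_sub (l * m) k).trans_eq (abs_sub_comm _ _)
    rw [abs_of_pos (by linarith : (0 : ℝ) < k)] at this
    exact max_le (by linarith) (by linarith)
  calc (1 : ℝ) ≤ |(t : ℝ) * (k : ℝ) ^ d - s * (m : ℝ) ^ d| := by
        exact_mod_cast Int.one_le_abs hne
    _ = t * |(k : ℝ) ^ d - (l * m) ^ d| := by
        rw [← hl, mul_assoc, ← mul_pow, ← mul_sub, abs_mul, Nat.abs_cast]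
    _ ≤ t * (|k - l * m| * d * max |(k : ℝ)| |l * m| ^ (d - 1)) := by
        gcongr
        exact abs_pow_sub_pow_le _ _ _
    _ ≤ t * (|k - l * m| * d * (2 * (k : ℝ)) ^ (d - 1)) := by gcongr

-- The `d`-th root `l` of `s / t` is irrational, so a good approximation to it by `k / m` forces a
-- large `k`.
theorem le_mul_pow_of_mul_abs_sub_mul_le {d s t : ℕ} {k m : ℤ} {l x B S : ℝ} (hd : 2 ≤ d)
    (hs : Squarefree s) (ht : Squarefree t) (hst : s ≠ t) (hk : 0 < k) (hl : t * l ^ d = s)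
    (htS : t ≤ S) (hx : 0 ≤ x) (hB : x * |k - l * m| ≤ B) :
    x ≤ S * d * (2 * (k : ℝ)) ^ (d - 1) * B := by
  have ht1 : (1 : ℝ) ≤ t := by exact_mod_cast Nat.pos_of_ne_zero ht.ne_zero
  have hk1 : (1 : ℝ) ≤ k := by exact_mod_cast hk
  have hd1 : (1 : ℝ) ≤ d := by exact_mod_cast (by omega : 1 ≤ d)
  have hS0 : 0 ≤ S := by linarith
  have hB0 : 0 ≤ B := (by positivity : 0 ≤ x * |k - l * m|).trans hB
  rcases le_or_gt x B with hxB | hxB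
  · have hpow : 1 ≤ (2 * (k : ℝ)) ^ (d - 1) := one_le_pow₀ (by linarith)
    exact hxB.trans (le_mul_of_one_le_left hB0 (one_le_mul_of_one_le_of_one_le
      (one_le_mul_of_one_le_of_one_le (ht1.trans htS) hd1) hpow))
  · have hkl : |k - l * m| ≤ 1 := by
      by_contra! hlt
      nlinarith
    calc x ≤ x * (t * (|k - l * m| * d * (2 * (k : ℝ)) ^ (d - 1))) :=
          le_mul_of_one_le_right hx
            (one_le_mul_abs_sub_mul_of_squarefree hd hs ht hst hk hl hkl)
      _ = t * d * (2 * (k : ℝ)) ^ (d - 1) * (x * |k - l * m|) := by ring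
      _ ≤ S * d * (2 * (k : ℝ)) ^ (d - 1) * B := by gcongr

/-- The pair `y < x` realises the value ratio `|P(x)| / |P(y)| = s / t`. -/
def HasValueRatio (P : ℤ[X]) (s t x y : ℕ) : Prop :=
  y ≠ 0 ∧ y < x ∧ absEval P x ≠ 0 ∧ t * absEval P x = s * absEval P y

theorem HasValueRatio.mul_abs_sub_mul_le {h C l S : ℝ} {s t x y : ℕ}
    (hxy : HasValueRatio P s t x y) (hd : 2 ≤ P.natDegree) (happ : IsShiftedPowApprox P h C)
    (hS : 1 ≤ S) (ht : t ≠ 0) (hsS : s ≤ S) (hl : 0 ≤ l) (hlst : t * l ^ P.natDegree = s)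
    (hhy : 2 * |h| ≤ y) :
    x * |((x : ℝ) + h) - l * (y + h)| ≤ 2 ^ P.natDegree * C * S := by
  obtain ⟨hy0, hyx, -, heq⟩ := hxy
  have ht1 : (1 : ℝ) ≤ t := by exact_mod_cast Nat.pos_of_ne_zero ht
  refine mul_abs_sub_mul_le_of_isShiftedPowApprox hd happ hy0 hhy hyx.le hl
    ((le_mul_of_one_le_left (by positivity) ht1).trans (hlst.trans_le hsS)) hS ?_
  have heq' : (t : ℝ) * absEval P x = s * absEval P y := by exact_mod_cast heq
  rw [← hlst, mul_assoc] at heq'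
  exact mul_left_cancel₀ (by positivity) heq'

theorem mul_abs_diff_sub_mul_diff_le {h l B x y x' y' : ℝ} (hx0 : 0 ≤ x) (hxx' : x ≤ x')
    (hx : x * |(x + h) - l * (y + h)| ≤ B) (hx' : x' * |(x' + h) - l * (y' + h)| ≤ B) :
    x * |(x' - x) - l * (y' - y)| ≤ 2 * B := by
  calc x * |(x' - x) - l * (y' - y)|
      = x * |((x' + h) - l * (y' + h)) - ((x + h) - l * (y + h))| := by ring_nf
    _ ≤ x * (|(x' + h) - l * (y' + h)| + |(x + h) - l * (y + h)|) := by
        gcongr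
        exact abs_sub _ _
    _ ≤ x' * |(x' + h) - l * (y' + h)| + x * |(x + h) - l * (y + h)| := by
        rw [mul_add]
        gcongr
    _ ≤ 2 * B := by linarith

theorem exists_nonneg_mul_pow_eq {s t : ℝ} (hs : 0 ≤ s) (ht : 0 < t) {d : ℕ} (hd : d ≠ 0) :
    ∃ l : ℝ, 0 ≤ l ∧ t * l ^ d = s := by
  refine ⟨(s / t) ^ ((d : ℝ)⁻¹), by positivity, ?_⟩
  rw [Real.rpow_inv_natCast_pow (by positivity) hd]
  field_simp

theorem le_mul_gap_pow_of_isShiftedPowApprox {h C S : ℝ} {s t x y x' y' : ℕ}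
    (hd : 2 ≤ P.natDegree) (happ : IsShiftedPowApprox P h C) (hS : 1 ≤ S)
    (hs : Squarefree s) (ht : Squarefree t) (hsS : s ≤ S) (htS : t ≤ S)
    (hxy : HasValueRatio P s t x y) (hxy' : HasValueRatio P s t x' y') (hxx' : x < x')
    (hhy : 2 * |h| ≤ y) (hhy' : 2 * |h| ≤ y') :
    (x : ℝ) ≤ S * P.natDegree * (2 * ((x' : ℝ) - x)) ^ (P.natDegree - 1) *
      (2 * (2 ^ P.natDegree * C * S)) := by
  have hC := happ.1
  obtain ⟨l, hl, hlst⟩ := exists_nonneg_mul_pow_eq (Nat.cast_nonneg s)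
    (Nat.cast_pos.2 (Nat.pos_of_ne_zero ht.ne_zero)) (by omega : P.natDegree ≠ 0)
  have hx := hxy.mul_abs_sub_mul_le hd happ hS ht.ne_zero hsS hl hlst hhy
  have hx' := hxy'.mul_abs_sub_mul_le hd happ hS ht.ne_zero hsS hl hlst hhy'
  rcases eq_or_ne s t with rfl | hst
  · have hs0 : (s : ℝ) ≠ 0 := by exact_mod_cast hs.ne_zero
    have hl1 : l = 1 := (pow_eq_one_iff_of_nonneg hl (by omega : P.natDegree ≠ 0)).1
      (by simpa [hs0] using hlst)
    have hyx : (y : ℝ) + 1 ≤ x := by exact_mod_cast hxy.2.1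
    have hk1 : (x : ℝ) + 1 ≤ x' := by exact_mod_cast hxx'
    have hd1 : (1 : ℝ) ≤ P.natDegree := by exact_mod_cast (by omega : 1 ≤ P.natDegree)
    have hpow : 1 ≤ (2 * ((x' : ℝ) - x)) ^ (P.natDegree - 1) := one_le_pow₀ (by linarith)
    rw [hl1, one_mul, add_sub_add_right_eq_sub, abs_of_nonneg (by linarith)] at hx
    have hxB : (x : ℝ) ≤ 2 * (2 ^ P.natDegree * C * S) := by nlinarith
    exact hxB.trans (le_mul_of_one_le_left (by positivity)
      (one_le_mul_of_one_le_of_one_le (one_le_mul_of_one_le_of_one_le hS hd1) hpow))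
  · have hdiff := mul_abs_diff_sub_mul_diff_le (Nat.cast_nonneg x) (by exact_mod_cast hxx'.le)
      hx hx'
    have := le_mul_pow_of_mul_abs_sub_mul_le (k := (x' : ℤ) - x) (m := (y' : ℤ) - y) hd hs ht hst
      (by omega) hlst htS (Nat.cast_nonneg x) (by push_cast; exact hdiff)
    exact_mod_cast this

theorem exists_small_of_hasValueRatio (hd : 0 < P.natDegree) (r : ℝ) :
    ∃ K : ℝ, 1 ≤ K ∧ ∀ (S : ℝ) (s t x y : ℕ), t ≠ 0 → s ≤ S → HasValueRatio P s t x y →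
      y < r → (x : ℝ) ≤ K * S := by
  obtain ⟨c, hc, hlower⟩ := exists_pow_le_mul_absEval (P := P) (by rintro rfl; simp at hd)
  obtain ⟨C, hC, hupper⟩ := exists_absEval_le_mul_pow P
  refine ⟨c * (C * max r 1 ^ P.natDegree), one_le_mul_of_one_le_of_one_le hc
    (one_le_mul_of_one_le_of_one_le hC (one_le_pow₀ (le_max_right _ _))),
    fun S s t x y ht hsS ⟨hy0, hyx, hfx, heq⟩ hyr => ?_⟩
  have hx1 : (1 : ℝ) ≤ x := by exact_mod_cast (by omega : 1 ≤ x)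
  have hfx_le : (absEval P x : ℝ) ≤ s * absEval P y := by
    exact_mod_cast heq ▸ Nat.le_mul_of_pos_left _ (Nat.pos_of_ne_zero ht)
  calc (x : ℝ) ≤ (x : ℝ) ^ P.natDegree := le_self_pow₀ hx1 hd.ne'
    _ ≤ c * absEval P x := hlower x hfx
    _ ≤ c * (s * absEval P y) := by gcongr
    _ ≤ c * (S * (C * max r 1 ^ P.natDegree)) := by
        have : (y : ℝ) ≤ max r 1 := hyr.le.trans (le_max_left _ _)
        have hfy : (absEval P y : ℝ) ≤ C * max r 1 ^ P.natDegree :=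
          (hupper y hy0).trans (by gcongr)
        have : (0 : ℝ) ≤ S := (Nat.cast_nonneg s).trans hsS
        gcongr
    _ = c * (C * max r 1 ^ P.natDegree) * S := by ring

theorem exists_le_mul_gap_pow (hd : 2 ≤ P.natDegree) :
    ∃ K : ℝ, ∀ (S : ℝ) (s t x y x' y' : ℕ), 1 ≤ S → Squarefree s → Squarefree t →
      s ≤ S → t ≤ S → HasValueRatio P s t x y → HasValueRatio P s t x' y' → x < x' →
      (x : ℝ) ≤ K * S ^ 2 * ((x' : ℝ) - x) ^ (P.natDegree - 1) := by
  obtain ⟨h, C, happ⟩ := exists_isShiftedPowApprox hd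
  obtain ⟨K, hK, hsmall⟩ := exists_small_of_hasValueRatio (P := P) (by omega) (2 * |h|)
  have hC := happ.1
  set d := P.natDegree
  refine ⟨K + d * 2 ^ (d - 1) * (2 * (2 ^ d * C)),
    fun S s t x y x' y' hS hs ht hsS htS hxy hxy' hxx' => ?_⟩
  have hk1 : (1 : ℝ) ≤ (x' : ℝ) - x := by
    have : (x : ℝ) + 1 ≤ x' := by exact_mod_cast hxx'
    linarith
  have hpow : 1 ≤ ((x' : ℝ) - x) ^ (d - 1) := one_le_pow₀ hk1
  by_cases hlarge : 2 * |h| ≤ y ∧ 2 * |h| ≤ y'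
  · calc (x : ℝ) ≤ S * d * (2 * ((x' : ℝ) - x)) ^ (d - 1) * (2 * (2 ^ d * C * S)) :=
          le_mul_gap_pow_of_isShiftedPowApprox hd happ hS hs ht hsS htS hxy hxy' hxx'
            hlarge.1 hlarge.2
      _ = d * 2 ^ (d - 1) * (2 * (2 ^ d * C)) * S ^ 2 * ((x' : ℝ) - x) ^ (d - 1) := by
          rw [mul_pow]; ring
      _ ≤ _ := by gcongr; exact le_add_of_nonneg_left (by linarith)
  · have hxK : (x : ℝ) ≤ K * S := by
      rcases not_and_or.1 hlarge with hy | hy'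
      · exact hsmall S s t x y ht.ne_zero hsS hxy (not_le.1 hy)
      · have : (x : ℝ) ≤ x' := by exact_mod_cast hxx'.le
        exact this.trans (hsmall S s t x' y' ht.ne_zero hsS hxy' (not_le.1 hy'))
    calc (x : ℝ) ≤ K * S := hxK
      _ ≤ K * S ^ 2 * 1 := by rw [mul_one]; gcongr; exact le_self_pow₀ hS two_ne_zero
      _ ≤ _ := by gcongr; exact le_add_of_nonneg_right (by positivity)

/-! ### Pairs of values with a large common divisor -/

instance (P : ℤ[X]) (s t x y : ℕ) : Decidable (HasValueRatio P s t x y) :=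
  inferInstanceAs (Decidable (_ ∧ _))

theorem card_hasValueRatio_le (hd : 0 < P.natDegree) {N G X s t : ℕ} (hs : s ≠ 0) (hG : G ≠ 0)
    (hgap : ∀ x y x' y' : ℕ, X ≤ x → HasValueRatio P s t x y → HasValueRatio P s t x' y' →
      x < x' → G ≤ x' - x) :
    #{q ∈ Icc 1 N ×ˢ Icc 1 N | X ≤ q.1 ∧ HasValueRatio P s t q.1 q.2} ≤
      2 * P.natDegree * (N / G + 1) := by
  set A := {q ∈ Icc 1 N ×ˢ Icc 1 N | X ≤ q.1 ∧ HasValueRatio P s t q.1 q.2} with hA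
  have hfirst : #(A.image Prod.fst) ≤ N / G + 1 := by
    refine card_le_div_add_one_of_separated hG ?_ ?_
    · simp only [hA, mem_image, mem_filter, mem_product, mem_Icc]
      rintro _ ⟨q, hq, rfl⟩
      exact hq.1.1.2
    · simp only [hA, mem_image, mem_filter]
      rintro _ ⟨q, hq, rfl⟩ _ ⟨q', hq', rfl⟩
      exact hgap _ _ _ _ hq.2.1 hq.2.2 hq'.2.2
  have hfiber : ∀ x ∈ A.image Prod.fst, #{q ∈ A | q.1 = x} ≤ 2 * P.natDegree := fun x _ => by
    refine le_trans (card_le_card_of_injOn Prod.snd (fun q hq => ?_) fun q hq q' hq' h => ?_)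
      (card_absEval_eq_le hd (Icc 1 N) (t * absEval P x / s))
    · obtain ⟨hqA, rfl⟩ := mem_filter.1 hq
      obtain ⟨hq_mem, -, -, -, -, heq⟩ := mem_filter.1 hqA
      refine mem_filter.2 ⟨(mem_product.1 hq_mem).2, ?_⟩
      rw [heq, Nat.mul_div_cancel_left _ (Nat.pos_of_ne_zero hs)]
    · exact Prod.ext ((mem_filter.1 hq).2.trans (mem_filter.1 hq').2.symm) h
  exact (card_le_mul_card_image A _ hfiber).trans (Nat.mul_le_mul_left _ hfirst)

theorem hasValueRatio_div_gcd {x y : ℕ} (hy : y ≠ 0) (hyx : y < x) (hx : absEval P x ≠ 0) :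
    HasValueRatio P (absEval P x / (absEval P x).gcd (absEval P y))
      (absEval P y / (absEval P x).gcd (absEval P y)) x y := by
  refine ⟨hy, hyx, hx, ?_⟩
  rw [← Nat.mul_div_right_comm (Nat.gcd_dvd_right _ _), mul_comm,
    Nat.mul_div_right_comm (Nat.gcd_dvd_left _ _)]

theorem exists_absEval_le_mul_absEval (hP : P ≠ 0) :
    ∃ C : ℕ, 1 ≤ C ∧ ∀ x y : ℕ, y ≠ 0 → y ≤ x → absEval P x ≠ 0 →
      absEval P y ≤ C * absEval P x := by
  obtain ⟨c, hc, hlower⟩ := exists_pow_le_mul_absEval hP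
  obtain ⟨C, hC, hupper⟩ := exists_absEval_le_mul_pow P
  refine ⟨⌈C * c⌉₊, Nat.one_le_ceil_iff.2 (by positivity), fun x y hy hyx hx => ?_⟩
  have hyx' : (y : ℝ) ≤ x := by exact_mod_cast hyx
  have hreal : (absEval P y : ℝ) ≤ ⌈C * c⌉₊ * absEval P x := calc
    (absEval P y : ℝ) ≤ C * (y : ℝ) ^ P.natDegree := hupper y hy
    _ ≤ C * (x : ℝ) ^ P.natDegree := by gcongr
    _ ≤ C * (c * absEval P x) := by gcongr; exact hlower x hx
    _ = C * c * absEval P x := (mul_assoc _ _ _).symm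
    _ ≤ ⌈C * c⌉₊ * absEval P x := by gcongr; exact Nat.le_ceil _
  exact_mod_cast hreal

/-- Pairs `y < x` in `[1, N]` with `x ≥ X` and squarefree values for which `gcd(P(x), P(y))` is at
least `|P(x)| / S`. -/
def largeGcdPairs (P : ℤ[X]) (N S X : ℕ) : Finset (ℕ × ℕ) :=
  {q ∈ Icc 1 N ×ˢ Icc 1 N | q.2 < q.1 ∧ X ≤ q.1 ∧ Squarefree (absEval P q.1) ∧
    Squarefree (absEval P q.2) ∧ absEval P q.1 ≤ S * (absEval P q.1).gcd (absEval P q.2)}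

theorem card_largeGcdPairs_le_sum {C : ℕ} (hC : 1 ≤ C)
    (hle : ∀ x y : ℕ, y ≠ 0 → y ≤ x → absEval P x ≠ 0 → absEval P y ≤ C * absEval P x)
    (N S X : ℕ) :
    #(largeGcdPairs P N S X) ≤
      ∑ w ∈ (Icc 1 (C * S) ×ˢ Icc 1 (C * S)) with Squarefree w.1 ∧ Squarefree w.2,
        #{q ∈ Icc 1 N ×ˢ Icc 1 N | X ≤ q.1 ∧ HasValueRatio P w.1 w.2 q.1 q.2} := by
  refine (card_le_card fun q hq => ?_).trans card_biUnion_le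
  simp only [largeGcdPairs, mem_filter, mem_product] at hq
  obtain ⟨⟨hx, hy⟩, hyx, hX, hsx, hsy, hgcd⟩ := hq
  set g := (absEval P q.1).gcd (absEval P q.2)
  have hgx : g ∣ absEval P q.1 := Nat.gcd_dvd_left _ _
  have hgy : g ∣ absEval P q.2 := Nat.gcd_dvd_right _ _
  have hg : 0 < g := Nat.gcd_pos_of_pos_left _ (Nat.pos_of_ne_zero hsx.ne_zero)
  have hy0 : q.2 ≠ 0 := by have := mem_Icc.1 hy; omega
  have hmem : ∀ n, absEval P n ≤ C * absEval P q.1 → g ∣ absEval P n → Squarefree (absEval P n) →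
      absEval P n / g ∈ Icc 1 (C * S) := fun n hn hgn hsq => by
    refine mem_Icc.2 ⟨Nat.div_pos (Nat.le_of_dvd (Nat.pos_of_ne_zero hsq.ne_zero) hgn) hg, ?_⟩
    refine Nat.div_le_of_le_mul (hn.trans ((Nat.mul_le_mul_left C hgcd).trans_eq ?_))
    ring
  simp only [mem_biUnion, mem_filter, mem_product]
  exact ⟨(absEval P q.1 / g, absEval P q.2 / g),
    ⟨⟨hmem _ (Nat.le_mul_of_pos_left _ hC) hgx hsx,
      hmem _ (hle _ _ hy0 hyx.le hsx.ne_zero) hgy hsy⟩,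
      hsx.squarefree_of_dvd (Nat.div_dvd_of_dvd hgx),
      hsy.squarefree_of_dvd (Nat.div_dvd_of_dvd hgy)⟩,
    ⟨hx, hy⟩, hX, hasValueRatio_div_gcd hy0 hyx hsx.ne_zero⟩

theorem exists_gap_of_hasValueRatio (hd : 2 ≤ P.natDegree) :
    ∃ K : ℕ, ∀ R G s t x y x' y' : ℕ, R ≠ 0 → Squarefree s → Squarefree t → s ≤ R → t ≤ R →
      HasValueRatio P s t x y → HasValueRatio P s t x' y' → x < x' →
      K * R ^ 2 * G ^ (P.natDegree - 1) < x → G ≤ x' - x := by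
  obtain ⟨K, hgap⟩ := exists_le_mul_gap_pow hd
  refine ⟨⌈K⌉₊, fun R G s t x y x' y' hR hs ht hsR htR hxy hxy' hlt hx => ?_⟩
  by_contra! hG
  refine hx.not_ge ?_
  have hreal : (x : ℝ) ≤ (⌈K⌉₊ * R ^ 2 * (x' - x) ^ (P.natDegree - 1) : ℕ) := by
    push_cast [hlt.le]
    refine (hgap R s t x y x' y' (by exact_mod_cast Nat.pos_of_ne_zero hR) hs ht
      (by exact_mod_cast hsR) (by exact_mod_cast htR) hxy hxy' hlt).trans ?_
    have hKceil := Nat.le_ceil K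
    have hxx' : (x : ℝ) ≤ x' := by exact_mod_cast hlt.le
    gcongr
  calc x ≤ ⌈K⌉₊ * R ^ 2 * (x' - x) ^ (P.natDegree - 1) := by exact_mod_cast hreal
    _ ≤ ⌈K⌉₊ * R ^ 2 * G ^ (P.natDegree - 1) := by gcongr

theorem exists_card_largeGcdPairs_le (hd : 2 ≤ P.natDegree) :
    ∃ K : ℕ, ∀ N S G X : ℕ, S ≠ 0 → G ≠ 0 → K * S ^ 2 * G ^ (P.natDegree - 1) < X →
      #(largeGcdPairs P N S X) ≤ K * S ^ 2 * (N / G + 1) := by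
  obtain ⟨K, hgap⟩ := exists_gap_of_hasValueRatio hd
  obtain ⟨C, hC, hle⟩ := exists_absEval_le_mul_absEval (P := P) (by rintro rfl; simp at hd)
  refine ⟨(K + 2 * P.natDegree) * C ^ 2, fun N S G X hS hG hX => ?_⟩
  have hthreshold : K * (C * S) ^ 2 * G ^ (P.natDegree - 1) < X := calc
    K * (C * S) ^ 2 * G ^ (P.natDegree - 1)
      ≤ (K + 2 * P.natDegree) * (C * S) ^ 2 * G ^ (P.natDegree - 1) := by gcongr; omega
    _ = (K + 2 * P.natDegree) * C ^ 2 * S ^ 2 * G ^ (P.natDegree - 1) := by ring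
    _ < X := hX
  calc #(largeGcdPairs P N S X)
      ≤ ∑ w ∈ (Icc 1 (C * S) ×ˢ Icc 1 (C * S)) with Squarefree w.1 ∧ Squarefree w.2,
        #{q ∈ Icc 1 N ×ˢ Icc 1 N | X ≤ q.1 ∧ HasValueRatio P w.1 w.2 q.1 q.2} :=
        card_largeGcdPairs_le_sum hC hle N S X
    _ ≤ ∑ w ∈ (Icc 1 (C * S) ×ˢ Icc 1 (C * S)) with Squarefree w.1 ∧ Squarefree w.2,
        2 * P.natDegree * (N / G + 1) := sum_le_sum fun w hw => by
        obtain ⟨hw_mem, hs, ht⟩ := mem_filter.1 hw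
        obtain ⟨hs_mem, ht_mem⟩ := mem_product.1 hw_mem
        exact card_hasValueRatio_le (by omega) hs.ne_zero hG fun x y x' y' hXx hxy hxy' hlt =>
          hgap (C * S) G _ _ x y x' y' (by positivity) hs ht (mem_Icc.1 hs_mem).2
            (mem_Icc.1 ht_mem).2 hxy hxy' hlt (hthreshold.trans_le hXx)
    _ ≤ (C * S * (C * S)) * (2 * P.natDegree * (N / G + 1)) := by
        rw [sum_const, smul_eq_mul]
        refine Nat.mul_le_mul_right _ ((card_filter_le _ _).trans_eq ?_)
        rw [card_product, Nat.card_Icc, Nat.add_sub_cancel]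
    _ = 2 * P.natDegree * C ^ 2 * S ^ 2 * (N / G + 1) := by ring
    _ ≤ (K + 2 * P.natDegree) * C ^ 2 * S ^ 2 * (N / G + 1) := by gcongr; omega

/-! ### Triples with two large common divisors -/

theorem exists_rootBound_pow_card_primeFactors_le (hd : 0 < P.natDegree) {J : ℕ} (hJ : J ≠ 0) :
    ∃ Q : ℕ, ∀ x Z : ℕ, x ≠ 0 → x ≤ Z ^ J → Squarefree (absEval P x) →
      rootBound P ^ #(absEval P x).primeFactors ≤ Q * Z := by
  obtain ⟨C, -, hupper⟩ := exists_absEval_le_mul_pow P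
  have hB : 1 ≤ rootBound P := one_le_rootBound (by rintro rfl; simp at hd)
  set k := J * P.natDegree
  have hk0 : k ≠ 0 := mul_ne_zero hJ hd.ne'
  set b := rootBound P ^ k
  have hb : 1 ≤ b := Nat.one_le_pow _ _ hB
  set Q := b ^ b * ⌈C⌉₊
  refine ⟨Q, fun x Z hx hxZ hsq => (Nat.pow_le_pow_iff_left hk0).1 ?_⟩
  have hval : absEval P x ≤ ⌈C⌉₊ * x ^ P.natDegree := by
    have hreal : (absEval P x : ℝ) ≤ ⌈C⌉₊ * (x : ℝ) ^ P.natDegree :=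
      (hupper x hx).trans (by gcongr; exact Nat.le_ceil C)
    exact_mod_cast hreal
  calc (rootBound P ^ #(absEval P x).primeFactors) ^ k
      = b ^ #(absEval P x).primeFactors := pow_right_comm _ _ _
    _ ≤ b ^ b * absEval P x := pow_card_primeFactors_le_mul hb hsq
    _ ≤ b ^ b * (⌈C⌉₊ * (Z ^ J) ^ P.natDegree) := by gcongr; exact hval.trans (by gcongr)
    _ = Q * Z ^ k := by rw [← pow_mul Z, ← mul_assoc]
    _ ≤ Q ^ k * Z ^ k := by gcongr; exact Nat.le_self_pow hk0 Q
    _ = (Q * Z) ^ k := (mul_pow _ _ _).symm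

theorem card_dvd_absEval_le_of_dvd (hP : P ≠ 0) {x g : ℕ} (hx : Squarefree (absEval P x))
    (hg : g ∣ absEval P x) (M : ℕ) :
    #{y ∈ Icc 1 M | g ∣ absEval P y} ≤
      rootBound P ^ #(absEval P x).primeFactors * (M / g + 1) := by
  refine (card_dvd_absEval_le hP (hx.squarefree_of_dvd hg) M).trans (Nat.mul_le_mul_right _ ?_)
  exact Nat.pow_le_pow_right (one_le_rootBound hP)
    (card_le_card (Nat.primeFactors_mono hg hx.ne_zero))

theorem card_dvd_absEval_product_le (hP : P ≠ 0) {x a b : ℕ} (hx : Squarefree (absEval P x))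
    (ha : a ∣ absEval P x) (hb : b ∣ absEval P x) (M : ℕ) :
    #({y ∈ Icc 1 M | a ∣ absEval P y} ×ˢ {z ∈ Icc 1 M | b ∣ absEval P z}) ≤
      (rootBound P ^ #(absEval P x).primeFactors) ^ 2 * ((M / a + 1) * (M / b + 1)) := by
  rw [card_product]
  refine (Nat.mul_le_mul (card_dvd_absEval_le_of_dvd hP hx ha M)
    (card_dvd_absEval_le_of_dvd hP hx hb M)).trans_eq ?_
  ring

theorem card_pairs_div_gcd_mul_div_gcd_le (hd : 2 ≤ P.natDegree) {x : ℕ}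
    (hx : Squarefree (absEval P x)) (M V : ℕ) :
    #{q ∈ Icc 1 M ×ˢ Icc 1 M | (M / (absEval P x).gcd (absEval P q.1) + 1) *
      (M / (absEval P x).gcd (absEval P q.2) + 1) ≤ V} ≤
      (rootBound P ^ #(absEval P x).primeFactors) ^ 4 * V := by
  have hP : P ≠ 0 := by rintro rfl; simp at hd
  set f := absEval P
  set τ := rootBound P ^ #(f x).primeFactors
  set A := {w ∈ (f x).divisors ×ˢ (f x).divisors | (M / w.1 + 1) * (M / w.2 + 1) ≤ V}
  have hdivisors : #(f x).divisors ≤ τ := by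
    rw [card_divisors_of_squarefree hx]
    exact Nat.pow_le_pow_left (hd.trans (Nat.le_add_right _ _)) _
  have hA : #A ≤ τ * τ := calc
    #A ≤ #(f x).divisors * #(f x).divisors := (card_filter_le _ _).trans_eq (card_product _ _)
    _ ≤ τ * τ := by gcongr
  have hcover : {q ∈ Icc 1 M ×ˢ Icc 1 M |
      (M / (f x).gcd (f q.1) + 1) * (M / (f x).gcd (f q.2) + 1) ≤ V} ⊆
      A.biUnion fun w => {y ∈ Icc 1 M | w.1 ∣ f y} ×ˢ {z ∈ Icc 1 M | w.2 ∣ f z} := fun q hq => by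
    obtain ⟨hq_mem, hV⟩ := mem_filter.1 hq
    obtain ⟨hy, hz⟩ := mem_product.1 hq_mem
    have hgcd : ∀ n, (f x).gcd (f n) ∈ (f x).divisors := fun n =>
      Nat.mem_divisors.2 ⟨Nat.gcd_dvd_left _ _, hx.ne_zero⟩
    refine mem_biUnion.2 ⟨((f x).gcd (f q.1), (f x).gcd (f q.2)), ?_, ?_⟩
    · exact mem_filter.2 ⟨mem_product.2 ⟨hgcd _, hgcd _⟩, hV⟩
    · exact mem_product.2 ⟨mem_filter.2 ⟨hy, Nat.gcd_dvd_right _ _⟩,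
        mem_filter.2 ⟨hz, Nat.gcd_dvd_right _ _⟩⟩
  refine (card_le_card hcover).trans ((card_biUnion_le_card_mul _ _ (τ ^ 2 * V) ?_).trans ?_)
  · intro w hw
    obtain ⟨hw_mem, hV⟩ := mem_filter.1 hw
    obtain ⟨ha, hb⟩ := mem_product.1 hw_mem
    exact (card_dvd_absEval_product_le hP hx (Nat.dvd_of_mem_divisors ha)
      (Nat.dvd_of_mem_divisors hb) M).trans (Nat.mul_le_mul_left _ hV)
  · calc #A * (τ ^ 2 * V) ≤ τ * τ * (τ ^ 2 * V) := by gcongr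
      _ = τ ^ 4 * V := by ring

/-- Triples `((x, y), z)` in `[1, N]` with `y, z ≤ x` and `P(x)` squarefree for which
`gcd(P(x), P(y))` and `gcd(P(x), P(z))` are jointly large compared with `x`: up to divisor-function
factors, `V` bounds the number of `(y, z)` with the given pair of gcds. -/
def goodTriples (P : ℤ[X]) (N V : ℕ) : Finset ((ℕ × ℕ) × ℕ) :=
  {q ∈ (Icc 1 N ×ˢ Icc 1 N) ×ˢ Icc 1 N | q.1.2 ≤ q.1.1 ∧ q.2 ≤ q.1.1 ∧
    Squarefree (absEval P q.1.1) ∧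
    (q.1.1 / (absEval P q.1.1).gcd (absEval P q.1.2) + 1) *
      (q.1.1 / (absEval P q.1.1).gcd (absEval P q.2) + 1) ≤ V}

theorem card_goodTriples_le (hd : 2 ≤ P.natDegree) {N τ : ℕ} (V : ℕ)
    (hτ : ∀ x ∈ Icc 1 N, Squarefree (absEval P x) →
      rootBound P ^ #(absEval P x).primeFactors ≤ τ) :
    #(goodTriples P N V) ≤ τ ^ 4 * V * N := by
  have hmaps : ∀ q ∈ goodTriples P N V, q.1.1 ∈ {x ∈ Icc 1 N | Squarefree (absEval P x)} :=
    fun q hq => by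
      obtain ⟨hq_mem, -, -, hsq, -⟩ := mem_filter.1 hq
      exact mem_filter.2 ⟨(mem_product.1 (mem_product.1 hq_mem).1).1, hsq⟩
  refine (card_le_mul_card_image_of_maps_to hmaps (τ ^ 4 * V) fun x hx => ?_).trans
    (Nat.mul_le_mul_left _ ((card_filter_le _ _).trans (by simp)))
  obtain ⟨hxN, hsq⟩ := mem_filter.1 hx
  refine le_trans ?_ ((card_pairs_div_gcd_mul_div_gcd_le hd hsq x V).trans
    (by gcongr; exact hτ x hxN hsq))
  refine card_le_card_of_injOn (fun q => (q.1.2, q.2)) (fun q hq => ?_) fun q hq q' hq' h => ?_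
  · obtain ⟨hqgood, rfl⟩ := mem_filter.1 hq
    obtain ⟨hq_mem, hyx, hzx, -, hV⟩ := mem_filter.1 hqgood
    simp only [mem_product, mem_Icc] at hq_mem
    exact mem_filter.2 ⟨mem_product.2 ⟨mem_Icc.2 ⟨hq_mem.1.2.1, hyx⟩,
      mem_Icc.2 ⟨hq_mem.2.1, hzx⟩⟩, hV⟩
  · obtain ⟨hy, hz⟩ := Prod.mk.inj h
    exact Prod.ext (Prod.ext ((mem_filter.1 hq).2.trans (mem_filter.1 hq').2.symm) hy) hz

theorem div_add_one_mul_div_add_one_le_or {x a b c K T W : ℕ} (hK : 1 ≤ K) (hW : 1 ≤ W)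
    (hc : 1 ≤ c) (hcb : c ≤ b) (hba : b ≤ a) (hprod : x ^ 2 ≤ K * (a * b * c))
    (hxW : x ≤ T * W) (hTW : T ^ 2 ≤ W) :
    (x / a + 1) * (x / b + 1) ≤ 4 * K * W ∨ W ≤ x ∧ b * c ≤ T ^ 2 := by
  by_cases hbad : W ≤ x ∧ b ≤ T
  · exact Or.inr ⟨hbad.1, by rw [sq]; exact Nat.mul_le_mul hbad.2 (hcb.trans hbad.2)⟩
  left
  have hxb : x / b ≤ W := by
    refine Nat.div_le_of_le_mul ?_
    rcases not_and_or.1 hbad with hx | hb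
    · exact (not_le.1 hx).le.trans (Nat.le_mul_of_pos_left _ (hc.trans hcb))
    · exact hxW.trans (by gcongr; omega)
  have hxa : x / a ≤ x / b := Nat.div_le_div_left hba (hc.trans hcb)
  have hmul : (x / a) * (x / b) ≤ K * W := by
    refine (Nat.div_mul_div_le x a x b).trans (Nat.div_le_of_le_mul ?_)
    rcases le_total c W with hcW | hWc
    · calc x * x = x ^ 2 := (sq x).symm
        _ ≤ K * (a * b * c) := hprod
        _ ≤ K * (a * b * W) := by gcongr
        _ = a * b * (K * W) := by ring
    · calc x * x ≤ (T * W) * (T * W) := Nat.mul_le_mul hxW hxW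
        _ = W * W * T ^ 2 := by ring
        _ ≤ (a * b) * (K * W) := Nat.mul_le_mul (Nat.mul_le_mul (by omega) (by omega))
          (hTW.trans (Nat.le_mul_of_pos_left _ hK))
  have hWK : W ≤ K * W := Nat.le_mul_of_pos_left _ hK
  nlinarith

/-! ### Quadruples of distinct points with square product -/

theorem exists_sq_le_mul_absEval (hd : 2 ≤ P.natDegree) :
    ∃ C : ℕ, 1 ≤ C ∧ ∀ n : ℕ, absEval P n ≠ 0 → n ^ 2 ≤ C * absEval P n := by
  obtain ⟨c, hc, hlower⟩ := exists_pow_le_mul_absEval (P := P) (by rintro rfl; simp at hd)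
  refine ⟨⌈c⌉₊, Nat.one_le_ceil_iff.2 (by positivity), fun n hn => ?_⟩
  rcases n.eq_zero_or_pos with rfl | hn0
  · simp
  · have hreal : (n : ℝ) ^ P.natDegree ≤ ⌈c⌉₊ * absEval P n :=
      (hlower n hn).trans (by gcongr; exact Nat.le_ceil c)
    exact (Nat.pow_le_pow_right hn0 hd).trans (by exact_mod_cast hreal)

theorem card_isSquare_mul_absEval_le (hd : 0 < P.natDegree) (s : Finset ℕ) {a : ℕ} (ha : a ≠ 0) :
    #{n ∈ s | Squarefree (absEval P n) ∧ IsSquare (a * absEval P n)} ≤ 2 * P.natDegree := by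
  rcases eq_empty_or_nonempty {n ∈ s | Squarefree (absEval P n) ∧ IsSquare (a * absEval P n)}
    with hempty | ⟨m, hm⟩
  · simp [hempty]
  · obtain ⟨-, hm_sq, hm_mul⟩ := mem_filter.1 hm
    refine (card_le_card fun n hn => ?_).trans (card_absEval_eq_le hd s (absEval P m))
    obtain ⟨hns, hn_sq, hn_mul⟩ := mem_filter.1 hn
    exact mem_filter.2 ⟨hns, eq_of_squarefree_of_isSquare_mul ha hn_sq hm_sq hn_mul hm_mul⟩

/-- Quadruples of distinct points of `[1, N]` at which `P` takes squarefree values whose product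
is a square up to sign. -/
def squareQuadruples (P : ℤ[X]) (N : ℕ) : Finset (Fin 4 → ℕ) :=
  {v ∈ Fintype.piFinset fun _ => Icc 1 N | v.Injective ∧ (∀ i, Squarefree (absEval P (v i))) ∧
    IsSquare (∏ i, absEval P (v i))}

/-- `v 3` is the largest entry, and `gcd(P(v 3), P(v i))` increases with `i = 0, 1, 2`. -/
def IsGcdSorted (P : ℤ[X]) (v : Fin 4 → ℕ) : Prop :=
  (∀ i, v i ≤ v 3) ∧
    (absEval P (v 3)).gcd (absEval P (v 0)) ≤ (absEval P (v 3)).gcd (absEval P (v 1)) ∧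
    (absEval P (v 3)).gcd (absEval P (v 1)) ≤ (absEval P (v 3)).gcd (absEval P (v 2))

instance (P : ℤ[X]) : DecidablePred (IsGcdSorted P) :=
  fun _ => inferInstanceAs (Decidable (_ ∧ _))

theorem mem_squareQuadruples {N : ℕ} {v : Fin 4 → ℕ} :
    v ∈ squareQuadruples P N ↔ (∀ i, v i ∈ Icc 1 N) ∧ v.Injective ∧
      (∀ i, Squarefree (absEval P (v i))) ∧ IsSquare (∏ i, absEval P (v i)) := by
  rw [squareQuadruples, mem_filter, Fintype.mem_piFinset]

theorem squareQuadruples_mono (P : ℤ[X]) : Monotone (squareQuadruples P) := fun _ _ hMN =>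
  filter_subset_filter _ (Fintype.piFinset_subset _ _ fun _ => Icc_subset_Icc_right hMN)

theorem comp_perm_mem_squareQuadruples {N : ℕ} {v : Fin 4 → ℕ} (hv : v ∈ squareQuadruples P N)
    (σ : Equiv.Perm (Fin 4)) : v ∘ σ ∈ squareQuadruples P N := by
  obtain ⟨hN, hinj, hsq, hprod⟩ := mem_squareQuadruples.1 hv
  refine mem_squareQuadruples.2
    ⟨fun i => hN _, hinj.comp σ.injective, fun i => hsq _, ?_⟩
  exact (Equiv.prod_comp σ fun i => absEval P (v i)).symm ▸ hprod

theorem exists_isGcdSorted_comp (P : ℤ[X]) (v : Fin 4 → ℕ) :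
    ∃ σ : Equiv.Perm (Fin 4), IsGcdSorted P (v ∘ σ) := by
  obtain ⟨i, hi⟩ := Finite.exists_max v
  obtain ⟨σ, hσ, hmono⟩ := exists_perm_last_eq_and_monotone
    (fun j => (absEval P (v i)).gcd (absEval P (v j))) i
  have hlast : (v ∘ σ) 3 = v i := congrArg v hσ
  refine ⟨σ, fun j => hlast ▸ hi _, ?_, ?_⟩ <;> rw [hlast]
  · exact hmono (show (0 : Fin 3) ≤ 1 by decide)
  · exact hmono (show (1 : Fin 3) ≤ 2 by decide)

theorem card_squareQuadruples_le_mul_card_isGcdSorted (P : ℤ[X]) (N : ℕ) :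
    #(squareQuadruples P N) ≤ 24 * #{v ∈ squareQuadruples P N | IsGcdSorted P v} :=
  card_le_factorial_mul_card_filter (fun _ => comp_perm_mem_squareQuadruples)
    fun v _ => exists_isGcdSorted_comp P v

theorem card_squareQuadruples_fiber_le (hd : 0 < P.natDegree) (N : ℕ) (b : (ℕ × ℕ) × ℕ) :
    #{v ∈ squareQuadruples P N | ((v 3, v 2), v 1) = b} ≤ 2 * P.natDegree := by
  set a := absEval P b.1.1 * absEval P b.1.2 * absEval P b.2 with ha_def
  rcases eq_or_ne a 0 with ha | ha
  · refine (card_eq_zero.2 (filter_eq_empty_iff.2 ?_)).trans_le (Nat.zero_le _)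
    rintro v hv rfl
    obtain ⟨-, -, hsq, -⟩ := mem_squareQuadruples.1 hv
    exact mul_ne_zero (mul_ne_zero (hsq 3).ne_zero (hsq 2).ne_zero) (hsq 1).ne_zero ha
  · refine le_trans (card_le_card_of_injOn (fun v => v 0) (fun v hv => ?_) fun v hv w hw h0 => ?_)
      (card_isSquare_mul_absEval_le hd (Icc 1 N) ha)
    · obtain ⟨hv_mem, rfl⟩ := mem_filter.1 hv
      obtain ⟨hN, -, hsq, hprod⟩ := mem_squareQuadruples.1 hv_mem
      refine mem_filter.2 ⟨hN 0, hsq 0, ?_⟩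
      rw [Fin.prod_univ_four] at hprod
      convert hprod using 1
      rw [ha_def]
      ring
    · have h := (mem_filter.1 hv).2.trans (mem_filter.1 hw).2.symm
      simp only [Prod.mk.injEq] at h
      funext i
      fin_cases i
      exacts [h0, h.2, h.1.2, h.1.1]

theorem absEval_le_gcd_mul_gcd_mul_gcd {v : Fin 4 → ℕ} (hsq : Squarefree (absEval P (v 3)))
    (hprod : IsSquare (∏ i, absEval P (v i))) :
    absEval P (v 3) ≤ (absEval P (v 3)).gcd (absEval P (v 2)) *
      (absEval P (v 3)).gcd (absEval P (v 1)) * (absEval P (v 3)).gcd (absEval P (v 0)) := by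
  set f := absEval P
  have hdvd : f (v 3) ∣ f (v 2) * f (v 1) * f (v 0) := by
    refine dvd_of_squarefree_of_isSquare_mul hsq ?_
    rw [Fin.prod_univ_four] at hprod
    convert hprod using 1
    ring
  have hgcd : ∀ i, 0 < (f (v 3)).gcd (f (v i)) := fun i =>
    Nat.gcd_pos_of_pos_left _ (Nat.pos_of_ne_zero hsq.ne_zero)
  refine Nat.le_of_dvd (Nat.mul_pos (Nat.mul_pos (hgcd 2) (hgcd 1)) (hgcd 0)) ?_
  calc f (v 3) = (f (v 3)).gcd (f (v 2) * f (v 1) * f (v 0)) := (Nat.gcd_eq_left hdvd).symm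
    _ ∣ (f (v 3)).gcd (f (v 2) * f (v 1)) * (f (v 3)).gcd (f (v 0)) :=
      Nat.gcd_mul_right_dvd_mul_gcd _ _ _
    _ ∣ _ := Nat.mul_dvd_mul_right (Nat.gcd_mul_right_dvd_mul_gcd _ _ _) _

theorem mem_goodTriples_or_mem_largeGcdPairs {C N T W : ℕ} (hC : 1 ≤ C)
    (hlower : ∀ n : ℕ, absEval P n ≠ 0 → n ^ 2 ≤ C * absEval P n) (hW : 1 ≤ W) (hN : N ≤ T * W)
    (hTW : T ^ 2 ≤ W) {v : Fin 4 → ℕ} (hv : v ∈ squareQuadruples P N) (hsort : IsGcdSorted P v) :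
    ((v 3, v 2), v 1) ∈ goodTriples P N (4 * C * W) ∨
      (v 3, v 2) ∈ largeGcdPairs P N (T ^ 2) W := by
  obtain ⟨hvN, hinj, hsq, hprod⟩ := mem_squareQuadruples.1 hv
  obtain ⟨hmax, h01, h12⟩ := hsort
  have hpos : 0 < absEval P (v 3) := Nat.pos_of_ne_zero (hsq 3).ne_zero
  have hle := absEval_le_gcd_mul_gcd_mul_gcd (hsq 3) hprod
  rcases div_add_one_mul_div_add_one_le_or hC hW (Nat.gcd_pos_of_pos_left _ hpos) h01 h12
    ((hlower _ hpos.ne').trans (Nat.mul_le_mul_left C hle)) ((mem_Icc.1 (hvN 3)).2.trans hN) hTW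
    with hgood | ⟨hWx, hbc⟩
  · exact Or.inl (mem_filter.2 ⟨mem_product.2 ⟨mem_product.2 ⟨hvN 3, hvN 2⟩, hvN 1⟩,
      hmax 2, hmax 1, hsq 3, hgood⟩)
  · have hne : v 2 ≠ v 3 := hinj.ne (by decide)
    refine Or.inr (mem_filter.2 ⟨mem_product.2 ⟨hvN 3, hvN 2⟩,
      lt_of_le_of_ne (hmax 2) hne, hWx, hsq 3, hsq 2, hle.trans ?_⟩)
    rw [mul_assoc, mul_comm]
    exact Nat.mul_le_mul_right _ hbc

theorem card_squareQuadruples_le (hd : 0 < P.natDegree) {C N T W : ℕ} (hC : 1 ≤ C)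
    (hlower : ∀ n : ℕ, absEval P n ≠ 0 → n ^ 2 ≤ C * absEval P n) (hW : 1 ≤ W) (hN : N ≤ T * W)
    (hTW : T ^ 2 ≤ W) :
    #(squareQuadruples P N) ≤ 48 * P.natDegree *
      (#(goodTriples P N (4 * C * W)) + #(largeGcdPairs P N (T ^ 2) W) * N) := by
  have hmaps : ∀ v ∈ squareQuadruples P N, IsGcdSorted P v → ((v 3, v 2), v 1) ∈
      goodTriples P N (4 * C * W) ∪ largeGcdPairs P N (T ^ 2) W ×ˢ Icc 1 N := fun v hv hsort => by
    have hor := mem_goodTriples_or_mem_largeGcdPairs hC hlower hW hN hTW hv hsort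
    exact mem_union.2 (hor.imp_right fun h => mem_product.2 ⟨h, (mem_squareQuadruples.1 hv).1 1⟩)
  calc #(squareQuadruples P N)
      ≤ 24 * #{v ∈ squareQuadruples P N | IsGcdSorted P v} :=
        card_squareQuadruples_le_mul_card_isGcdSorted P N
    _ ≤ 24 * (2 * P.natDegree *
        #(goodTriples P N (4 * C * W) ∪ largeGcdPairs P N (T ^ 2) W ×ˢ Icc 1 N)) := by
        refine Nat.mul_le_mul_left _ (card_le_mul_card_image_of_maps_to
          (f := fun v => ((v 3, v 2), v 1))
          (fun v hv => hmaps v (mem_filter.1 hv).1 (mem_filter.1 hv).2) _ fun b _ => ?_)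
        exact (card_le_card (filter_subset_filter _ (filter_subset _ _))).trans
          (card_squareQuadruples_fiber_le hd N b)
    _ ≤ 24 * (2 * P.natDegree *
        (#(goodTriples P N (4 * C * W)) + #(largeGcdPairs P N (T ^ 2) W ×ˢ Icc 1 N))) := by
        gcongr
        exact card_union_le _ _
    _ = _ := by rw [card_product, Nat.card_Icc, Nat.add_sub_cancel]; ring

-- The separation `G = Z ^ 21` beats `S ^ 2 = Z ^ 20`, and `Z ^ (21 * d)` exceeds the threshold
-- `K * S ^ 2 * G ^ (d - 1) = K * Z ^ (21 * d - 1)` as soon as `K < Z`.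
theorem exists_mul_card_largeGcdPairs_pow_le (hd : 2 ≤ P.natDegree) :
    ∃ K : ℕ, ∀ Z : ℕ, K < Z →
      Z * #(largeGcdPairs P (Z ^ (21 * P.natDegree + 5)) ((Z ^ 5) ^ 2) (Z ^ (21 * P.natDegree))) ≤
        2 * K * Z ^ (21 * P.natDegree + 5) := by
  obtain ⟨K, hlarge⟩ := exists_card_largeGcdPairs_le hd
  refine ⟨K, fun Z hKZ => ?_⟩
  have hZ : 0 < Z := by omega
  obtain ⟨e, he⟩ : ∃ e, P.natDegree = e + 1 := ⟨P.natDegree - 1, by omega⟩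
  have hthreshold : K * ((Z ^ 5) ^ 2) ^ 2 * (Z ^ 21) ^ (P.natDegree - 1) <
      Z ^ (21 * P.natDegree) := calc
    K * ((Z ^ 5) ^ 2) ^ 2 * (Z ^ 21) ^ (P.natDegree - 1) = K * Z ^ (21 * e + 20) := by
      rw [he, Nat.add_sub_cancel]; ring
    _ < Z * Z ^ (21 * e + 20) := by gcongr
    _ = Z ^ (21 * P.natDegree) := by rw [he]; ring
  set N := Z ^ (21 * P.natDegree + 5)
  have hGN : Z ^ 21 ≤ N := Nat.pow_le_pow_right hZ (by omega)
  calc Z * #(largeGcdPairs P N ((Z ^ 5) ^ 2) (Z ^ (21 * P.natDegree)))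
      ≤ Z * (K * ((Z ^ 5) ^ 2) ^ 2 * (N / Z ^ 21 + 1)) := by
        gcongr
        exact hlarge N _ (Z ^ 21) _ (by positivity) (by positivity) hthreshold
    _ = K * (Z ^ 21 * (N / Z ^ 21) + Z ^ 21) := by ring
    _ ≤ K * (N + N) := by gcongr; exact Nat.mul_div_le N _
    _ = 2 * K * N := by ring

theorem exists_mul_card_goodTriples_pow_le (hd : 2 ≤ P.natDegree) (m C : ℕ) :
    ∃ K : ℕ, ∀ Z : ℕ,
      Z * #(goodTriples P (Z ^ (m + 5)) (4 * C * Z ^ m)) ≤ K * (Z ^ (m + 5)) ^ 2 := by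
  obtain ⟨Q, hQ⟩ := exists_rootBound_pow_card_primeFactors_le (P := P) (by omega)
    (Nat.succ_ne_zero (m + 4))
  refine ⟨4 * C * Q ^ 4, fun Z => ?_⟩
  have hτ : ∀ x ∈ Icc 1 (Z ^ (m + 5)), Squarefree (absEval P x) →
      rootBound P ^ #(absEval P x).primeFactors ≤ Q * Z := fun x hx hsq =>
    hQ x Z (Nat.one_le_iff_ne_zero.1 (mem_Icc.1 hx).1) (mem_Icc.1 hx).2 hsq
  calc Z * #(goodTriples P (Z ^ (m + 5)) (4 * C * Z ^ m))
      ≤ Z * ((Q * Z) ^ 4 * (4 * C * Z ^ m) * Z ^ (m + 5)) := by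
        gcongr
        exact card_goodTriples_le hd _ hτ
    _ = 4 * C * Q ^ 4 * (Z ^ (m + 5)) ^ 2 := by ring

theorem exists_mul_card_squareQuadruples_pow_le (hd : 2 ≤ P.natDegree) :
    ∃ J K : ℕ, J ≠ 0 ∧ ∀ Z : ℕ, K < Z →
      Z * #(squareQuadruples P (Z ^ J)) ≤ K * (Z ^ J) ^ 2 := by
  obtain ⟨C, hC, hlower⟩ := exists_sq_le_mul_absEval hd
  obtain ⟨K₁, hgood⟩ := exists_mul_card_goodTriples_pow_le hd (21 * P.natDegree) C
  obtain ⟨K₂, hlarge⟩ := exists_mul_card_largeGcdPairs_pow_le hd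
  refine ⟨21 * P.natDegree + 5, 48 * P.natDegree * (K₁ + 2 * K₂), by omega, fun Z hZ => ?_⟩
  have hK₂Z : K₂ < Z := by nlinarith
  have hZ0 : 0 < Z := by omega
  set W := Z ^ (21 * P.natDegree) with hW
  set N := Z ^ (21 * P.natDegree + 5) with hN
  have hTW : (Z ^ 5) ^ 2 ≤ W := by
    rw [← pow_mul]
    exact Nat.pow_le_pow_right hZ0 (by omega)
  calc Z * #(squareQuadruples P N)
      ≤ Z * (48 * P.natDegree *
          (#(goodTriples P N (4 * C * W)) + #(largeGcdPairs P N ((Z ^ 5) ^ 2) W) * N)) := by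
        gcongr
        exact card_squareQuadruples_le (by omega) hC hlower (Nat.one_le_pow _ _ hZ0)
          (by rw [hN, hW, pow_add, mul_comm]) hTW
    _ = 48 * P.natDegree * (Z * #(goodTriples P N (4 * C * W)) +
          Z * #(largeGcdPairs P N ((Z ^ 5) ^ 2) W) * N) := by ring
    _ ≤ 48 * P.natDegree * (K₁ * N ^ 2 + 2 * K₂ * N * N) :=
        Nat.mul_le_mul_left _
          (Nat.add_le_add (hgood Z) (Nat.mul_le_mul_right N (hlarge Z hK₂Z)))
    _ = _ := by ring

theorem isLittleO_sq_of_monotone_of_mul_pow_le {g : ℕ → ℕ} (hg : Monotone g) {J K : ℕ}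
    (hJ : J ≠ 0) (h : ∀ Z : ℕ, K < Z → Z * g (Z ^ J) ≤ K * (Z ^ J) ^ 2) :
    (fun N : ℕ => (g N : ℝ)) =o[atTop] fun N : ℕ => (N : ℝ) ^ 2 := by
  refine isLittleO_iff.2 fun ε hε => ?_
  obtain ⟨Z₀, hZ₀⟩ := exists_nat_gt (K * 4 ^ J / ε)
  filter_upwards [eventually_ge_atTop ((Z₀ + K + 1) ^ J)] with N hN
  set Y := J.nthRoot N
  have hY : Z₀ + K + 1 ≤ Y := (Nat.le_nthRoot_iff hJ).2 hN
  have hYN : Y ^ J ≤ N := (Nat.le_nthRoot_iff hJ).1 le_rfl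
  have hnat : (Y + 1) * g N ≤ K * 4 ^ J * N ^ 2 := calc
    (Y + 1) * g N ≤ (Y + 1) * g ((Y + 1) ^ J) := by
      gcongr
      exact hg (Nat.lt_pow_nthRoot_add_one hJ N).le
    _ ≤ K * ((Y + 1) ^ J) ^ 2 := h _ (by omega)
    _ ≤ K * ((2 * Y) ^ J) ^ 2 := by gcongr; omega
    _ = K * 4 ^ J * (Y ^ J) ^ 2 := by rw [mul_pow, mul_pow, pow_right_comm 2 J 2]; ring
    _ ≤ K * 4 ^ J * N ^ 2 := by gcongr
  have hY_large : K * 4 ^ J ≤ ε * (Y + 1 : ℝ) := by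
    have hY' : (Z₀ : ℝ) ≤ Y + 1 := by exact_mod_cast (by omega : Z₀ ≤ Y + 1)
    rw [div_lt_iff₀ hε] at hZ₀
    nlinarith
  have hreal : ((Y : ℝ) + 1) * g N ≤ (Y + 1) * (ε * N ^ 2) := calc
    ((Y : ℝ) + 1) * g N ≤ K * 4 ^ J * N ^ 2 := by exact_mod_cast hnat
    _ ≤ ε * (Y + 1) * N ^ 2 := by gcongr
    _ = (Y + 1) * (ε * N ^ 2) := by ring
  simpa using le_of_mul_le_mul_left hreal (by positivity)

theorem isLittleO_card_squareQuadruples (hd : 2 ≤ P.natDegree) :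
    (fun N : ℕ => (#(squareQuadruples P N) : ℝ)) =o[atTop] fun N : ℕ => (N : ℝ) ^ 2 := by
  obtain ⟨J, K, hJ, h⟩ := exists_mul_card_squareQuadruples_pow_le hd
  exact isLittleO_sq_of_monotone_of_mul_pow_le
    (fun _ _ hMN => card_le_card (squareQuadruples_mono P hMN)) hJ h

/-! ### Values with the same largest prime factor -/

theorem IsMaxPrimeFac.unique_s17 {p q : ℕ} {m : ℤ} (hp : IsMaxPrimeFac p m) (hq : IsMaxPrimeFac q m) :
    p = q :=
  le_antisymm (hq.2.2 p hp.1 hp.2.1) (hp.2.2 q hq.1 hq.2.1)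

theorem IsMaxPrimeFac.natAbs_dvd_factorial {p : ℕ} {m : ℤ} (hp : IsMaxPrimeFac p m)
    (hm : Squarefree m) {K : ℕ} (hpK : p ≤ K) : m.natAbs ∣ K.factorial := by
  rw [← Nat.prod_primeFactors_of_squarefree (Int.squarefree_natAbs.2 hm),
    ← prod_Ico_id_eq_factorial]
  refine prod_dvd_prod_of_subset _ _ _ fun q hq => mem_Ico.2 ?_
  have hq_prime := Nat.prime_of_mem_primeFactors hq
  have hqp : q ≤ p := hp.2.2 q hq_prime (Int.natCast_dvd.2 (Nat.dvd_of_mem_primeFactors hq))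
  exact ⟨hq_prime.one_le, Nat.lt_succ_of_le (hqp.trans hpK)⟩

open Classical in
/-- Pairs in `[1, N]` at which the values of `P` have the same largest prime factor, the first value
being squarefree. -/
noncomputable def matchedPairs (P : ℤ[X]) (N : ℕ) : Finset (ℕ × ℕ) :=
  {q ∈ Icc 1 N ×ˢ Icc 1 N | Squarefree (P.eval (q.1 : ℤ)) ∧
    ∃ p, IsMaxPrimeFac p (P.eval (q.1 : ℤ)) ∧ IsMaxPrimeFac p (P.eval (q.2 : ℤ))}

open Classical in
theorem card_matchedPairs_large_prime_le (hP : P ≠ 0) (N : ℕ) {K : ℕ} (hK : K ≠ 0) :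
    #{q ∈ matchedPairs P N | ∃ p, K < p ∧ IsMaxPrimeFac p (P.eval (q.1 : ℤ))} ≤
      rootBound P * (N / K + 1) * N := by
  have hmaps : ∀ q ∈ {q ∈ matchedPairs P N | ∃ p, K < p ∧ IsMaxPrimeFac p (P.eval (q.1 : ℤ))},
      q.1 ∈ Icc 1 N := fun q hq => (mem_product.1 (mem_filter.1 (mem_filter.1 hq).1).1).1
  refine (card_le_mul_card_image_of_maps_to hmaps (rootBound P * (N / K + 1))
    fun x _ => ?_).trans_eq (by rw [Nat.card_Icc, Nat.add_sub_cancel])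
  by_cases hx : ∃ p, K < p ∧ IsMaxPrimeFac p (P.eval (x : ℤ))
  · obtain ⟨p, hKp, hp⟩ := hx
    calc _ ≤ #{y ∈ Icc 1 N | p ∣ absEval P y} := by
          refine card_le_card_of_injOn Prod.snd (fun q hq => ?_) fun q hq q' hq' h =>
            Prod.ext ((mem_filter.1 hq).2.trans (mem_filter.1 hq').2.symm) h
          obtain ⟨hq_large, rfl⟩ := mem_filter.1 hq
          obtain ⟨hq_mem, -, r, hr₁, hr₂⟩ := mem_filter.1 (mem_filter.1 hq_large).1
          refine mem_filter.2 ⟨(mem_product.1 hq_mem).2, Int.natCast_dvd.1 ?_⟩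
          exact hp.unique_s17 hr₁ ▸ hr₂.2.1
      _ ≤ rootBound P ^ #p.primeFactors * (N / p + 1) :=
          card_dvd_absEval_le hP hp.1.squarefree N
      _ ≤ rootBound P * (N / K + 1) := by
          rw [hp.1.primeFactors, card_singleton, pow_one]
          gcongr
  · refine (card_eq_zero.2 (filter_eq_empty_iff.2 ?_)).trans_le (Nat.zero_le _)
    rintro q hq rfl
    exact hx (mem_filter.1 hq).2

theorem card_matchedPairs_le {C : ℕ} (hP : P ≠ 0)
    (hlower : ∀ n : ℕ, absEval P n ≠ 0 → n ^ 2 ≤ C * absEval P n) (N : ℕ) {K : ℕ} (hK : K ≠ 0) :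
    #(matchedPairs P N) ≤ C * K.factorial * N + rootBound P * (N / K + 1) * N := by
  classical
  rw [← card_filter_add_card_filter_not (s := matchedPairs P N)
    (fun q => ∃ p, K < p ∧ IsMaxPrimeFac p (P.eval (q.1 : ℤ))), add_comm]
  refine Nat.add_le_add ?_ (card_matchedPairs_large_prime_le hP N hK)
  calc _ ≤ #(Icc 1 (C * K.factorial) ×ˢ Icc 1 N) := card_le_card fun q hq => ?_
    _ = C * K.factorial * N := by simp
  obtain ⟨hq_matched, hq_small⟩ := mem_filter.1 hq
  obtain ⟨hq_mem, hsq, p, hp, -⟩ := mem_filter.1 hq_matched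
  have hpK : p ≤ K := not_lt.1 fun hKp => hq_small ⟨p, hKp, hp⟩
  have hq₁ := mem_Icc.1 (mem_product.1 hq_mem).1
  refine mem_product.2 ⟨mem_Icc.2 ⟨hq₁.1, ?_⟩, (mem_product.1 hq_mem).2⟩
  calc q.1 ≤ q.1 ^ 2 := Nat.le_self_pow two_ne_zero _
    _ ≤ C * absEval P q.1 := hlower _ (Int.squarefree_natAbs.2 hsq).ne_zero
    _ ≤ C * K.factorial := by
      gcongr
      exact Nat.le_of_dvd K.factorial_pos (hp.natAbs_dvd_factorial hsq hpK)

theorem isLittleO_card_matchedPairs (hd : 2 ≤ P.natDegree) :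
    (fun N : ℕ => (#(matchedPairs P N) : ℝ)) =o[atTop] fun N : ℕ => (N : ℝ) ^ 2 := by
  have hP : P ≠ 0 := by rintro rfl; simp at hd
  obtain ⟨C, -, hlower⟩ := exists_sq_le_mul_absEval hd
  refine isLittleO_iff.2 fun ε hε => ?_
  set B := rootBound P
  obtain ⟨K, hK⟩ := exists_nat_gt (2 * B / ε)
  have hK0 : (0 : ℝ) < K := lt_of_le_of_lt (by positivity) hK
  obtain ⟨N₀, hN₀⟩ := exists_nat_gt (2 * (C * K.factorial + B) / ε)
  filter_upwards [eventually_ge_atTop N₀] with N hN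
  have hBK : B / K ≤ ε / 2 := by
    rw [div_lt_iff₀ hε] at hK
    rw [div_le_iff₀ hK0]
    linarith
  have hlinear : C * K.factorial + B ≤ ε / 2 * (N : ℝ) := by
    have hN' : 2 * (C * K.factorial + B) / ε ≤ (N : ℝ) :=
      hN₀.le.trans (by exact_mod_cast hN)
    rw [div_le_iff₀ hε] at hN'
    linarith
  have hcard : (#(matchedPairs P N) : ℝ) ≤ ε * N ^ 2 := calc
    (#(matchedPairs P N) : ℝ)
      ≤ (C * K.factorial * N + B * (N / K + 1 : ℕ) * N : ℕ) := by
        exact_mod_cast card_matchedPairs_le hP hlower N (by exact_mod_cast hK0.ne')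
    _ ≤ C * K.factorial * N + B * (N / K + 1) * N := by
        push_cast
        gcongr
        exact Nat.cast_div_le
    _ = (C * K.factorial + B) * N + B / K * N ^ 2 := by ring
    _ ≤ (ε / 2 * N) * N + ε / 2 * N ^ 2 := by gcongr
    _ = ε * N ^ 2 := by ring
  simpa using hcard

open Classical in
/-- Quadruples `(m₁, m₂, n₁, n₂)` in `[1, N]` with `m₁ ≠ m₂` and `n₁ ≠ n₂` at which `P` takes
squarefree values whose product is a square, `P(m₁)` and `P(m₂)` having the same largest prime
factor. -/
noncomputable def matchedQuadruples (P : ℤ[X]) (N : ℕ) : Finset (ℕ × ℕ × ℕ × ℕ) :=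
  {q ∈ Icc 1 N ×ˢ Icc 1 N ×ˢ Icc 1 N ×ˢ Icc 1 N |
    q.1 ≠ q.2.1 ∧ q.2.2.1 ≠ q.2.2.2 ∧
    Squarefree (P.eval (q.1 : ℤ)) ∧ Squarefree (P.eval (q.2.1 : ℤ)) ∧
    Squarefree (P.eval (q.2.2.1 : ℤ)) ∧ Squarefree (P.eval (q.2.2.2 : ℤ)) ∧
    (∃ p, IsMaxPrimeFac p (P.eval (q.1 : ℤ)) ∧ IsMaxPrimeFac p (P.eval (q.2.1 : ℤ))) ∧
    IsSquare (P.eval (q.1 : ℤ) * P.eval (q.2.1 : ℤ) * P.eval (q.2.2.1 : ℤ) *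
      P.eval (q.2.2.2 : ℤ))}

theorem isSquare_absEval_mul {m₁ m₂ n₁ n₂ : ℕ}
    (h : IsSquare (P.eval (m₁ : ℤ) * P.eval (m₂ : ℤ) * P.eval (n₁ : ℤ) * P.eval (n₂ : ℤ))) :
    IsSquare (absEval P m₁ * absEval P m₂ * absEval P n₁ * absEval P n₂) := by
  obtain ⟨k, hk⟩ := h
  exact ⟨k.natAbs, by simp only [absEval, ← Int.natAbs_mul, hk]⟩

/-- `{m₁, m₂}` and `{n₁, n₂}` meet, for `q = (m₁, m₂, n₁, n₂)`. -/
def IsCoincident (q : ℕ × ℕ × ℕ × ℕ) : Prop :=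
  (q.2.2.1 = q.1 ∨ q.2.2.1 = q.2.1) ∨ (q.2.2.2 = q.1 ∨ q.2.2.2 = q.2.1)

theorem eq_or_eq_of_squarefree_of_isSquare_mul {a b c e : ℕ} (ha : Squarefree a)
    (hb : Squarefree b) (he : Squarefree e) (h : IsSquare (a * b * c * e)) (hc : c = a ∨ c = b) :
    e = a ∨ e = b := by
  have hab : a * b ≠ 0 := mul_ne_zero ha.ne_zero hb.ne_zero
  rcases hc with rfl | rfl
  · exact Or.inr (eq_of_squarefree_of_isSquare_mul (mul_ne_zero hab ha.ne_zero) he hb h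
      ⟨c * b, by ring⟩)
  · exact Or.inl (eq_of_squarefree_of_isSquare_mul (mul_ne_zero hab hb.ne_zero) he ha h
      ⟨a * c, by ring⟩)

theorem absEval_eq_or_eq_of_isCoincident {N : ℕ} {q : ℕ × ℕ × ℕ × ℕ}
    (hq : q ∈ matchedQuadruples P N) (hc : IsCoincident q) :
    (absEval P q.2.2.1 = absEval P q.1 ∨ absEval P q.2.2.1 = absEval P q.2.1) ∧
      (absEval P q.2.2.2 = absEval P q.1 ∨ absEval P q.2.2.2 = absEval P q.2.1) := by
  classical
  obtain ⟨-, -, -, hm₁, hm₂, hn₁, hn₂, -, hprod⟩ := mem_filter.1 hq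
  rw [← Int.squarefree_natAbs] at hm₁ hm₂ hn₁ hn₂
  replace hprod := isSquare_absEval_mul hprod
  rcases hc with hc | hc
  · have hc' := hc.imp (congrArg (absEval P)) (congrArg (absEval P))
    exact ⟨hc', eq_or_eq_of_squarefree_of_isSquare_mul hm₁ hm₂ hn₂ hprod hc'⟩
  · have hc' := hc.imp (congrArg (absEval P)) (congrArg (absEval P))
    rw [mul_right_comm] at hprod
    exact ⟨eq_or_eq_of_squarefree_of_isSquare_mul hm₁ hm₂ hn₁ hprod hc', hc'⟩

open Classical in
theorem card_isCoincident_matchedQuadruples_le (hd : 0 < P.natDegree) (N : ℕ) :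
    #{q ∈ matchedQuadruples P N | IsCoincident q} ≤
      (4 * P.natDegree) ^ 2 * #(matchedPairs P N) := by
  have hmaps : ∀ q ∈ {q ∈ matchedQuadruples P N | IsCoincident q},
      (q.1, q.2.1) ∈ matchedPairs P N := fun q hq => by
    obtain ⟨hq_mem, -, -, hm₁, -, -, -, hp, -⟩ := mem_filter.1 (mem_filter.1 hq).1
    simp only [mem_product] at hq_mem
    exact mem_filter.2 ⟨mem_product.2 ⟨hq_mem.1, hq_mem.2.1⟩, hm₁, hp⟩
  refine card_le_mul_card_image_of_maps_to hmaps _ fun b _ => ?_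
  set F := {n ∈ Icc 1 N | absEval P n = absEval P b.1 ∨ absEval P n = absEval P b.2}
  have hF : #F ≤ 4 * P.natDegree := by
    rw [show F = _ from filter_or _ _ _]
    refine (card_union_le _ _).trans ?_
    have h₁ := card_absEval_eq_le hd (Icc 1 N) (absEval P b.1)
    have h₂ := card_absEval_eq_le hd (Icc 1 N) (absEval P b.2)
    omega
  calc _ ≤ #(F ×ˢ F) := card_le_card_of_injOn (fun q => q.2.2) (fun q hq => ?_)
        fun q hq q' hq' h => ?_
    _ ≤ (4 * P.natDegree) ^ 2 := by rw [card_product, sq]; gcongr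
  · obtain ⟨hq_coinc, rfl⟩ := mem_filter.1 hq
    obtain ⟨hq_matched, hc⟩ := mem_filter.1 hq_coinc
    obtain ⟨hn₁, hn₂⟩ := absEval_eq_or_eq_of_isCoincident hq_matched hc
    have hq_mem := (mem_filter.1 hq_matched).1
    simp only [mem_product] at hq_mem
    exact mem_product.2 ⟨mem_filter.2 ⟨hq_mem.2.2.1, hn₁⟩, mem_filter.2 ⟨hq_mem.2.2.2, hn₂⟩⟩
  · obtain ⟨h₁, h₂⟩ := Prod.mk.inj ((mem_filter.1 hq).2.trans (mem_filter.1 hq').2.symm)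
    exact Prod.ext h₁ (Prod.ext h₂ h)

open Classical in
theorem card_not_isCoincident_matchedQuadruples_le (P : ℤ[X]) (N : ℕ) :
    #{q ∈ matchedQuadruples P N | ¬ IsCoincident q} ≤ #(squareQuadruples P N) := by
  refine card_le_card_of_injOn (fun q => ![q.1, q.2.1, q.2.2.1, q.2.2.2]) (fun q hq => ?_)
    fun q _ q' _ h => ?_
  · obtain ⟨hq_matched, hc⟩ := mem_filter.1 hq
    obtain ⟨hq_mem, hm, hn, hm₁, hm₂, hn₁, hn₂, -, hprod⟩ := mem_filter.1 hq_matched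
    simp only [mem_product] at hq_mem
    simp only [IsCoincident, not_or] at hc
    rw [← Int.squarefree_natAbs] at hm₁ hm₂ hn₁ hn₂
    refine mem_squareQuadruples.2 ⟨?_, ?_, ?_, ?_⟩
    · simpa [Fin.forall_fin_succ] using hq_mem
    · intro i j hij
      fin_cases i <;> fin_cases j <;> simp_all
    · simpa [Fin.forall_fin_succ] using ⟨hm₁, hm₂, hn₁, hn₂⟩
    · simpa [Fin.prod_univ_four] using isSquare_absEval_mul hprod
  · simpa [Prod.ext_iff] using h

theorem two_le_natDegree_prod_linear {k : ℕ} (hk : 2 ≤ k) {a b : Fin k → ℤ} (ha : ∀ i, a i ≠ 0) :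
    2 ≤ (∏ i, (C (a i) * X + C (b i))).natDegree := by
  have hdeg : ∀ i, (C (a i) * X + C (b i)).natDegree = 1 := fun i => natDegree_linear (ha i)
  rw [natDegree_prod _ _ fun i _ => ne_zero_of_natDegree_gt (hdeg i).ge,
    sum_congr rfl fun i _ => hdeg i]
  simpa using hk

theorem offdiagonal_quadruples_with_matching_max_prime_o_general (P : ℤ[X])
    (hd : 2 ≤ P.natDegree) :
    (fun N : ℕ => (#(matchedQuadruples P N) : ℝ)) =o[atTop] fun N : ℕ => (N : ℝ) ^ 2 := by
  classical
  refine IsBigO.trans_isLittleO (IsBigO.of_bound 1 (Eventually.of_forall fun N => ?_))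
    (((isLittleO_card_matchedPairs hd).const_mul_left ((4 * P.natDegree) ^ 2)).add
      (isLittleO_card_squareQuadruples hd))
  have hsplit : #(matchedQuadruples P N) ≤
      (4 * P.natDegree) ^ 2 * #(matchedPairs P N) + #(squareQuadruples P N) := by
    rw [← card_filter_add_card_filter_not (s := matchedQuadruples P N) IsCoincident]
    exact Nat.add_le_add (card_isCoincident_matchedQuadruples_le (by omega) N)
      (card_not_isCoincident_matchedQuadruples_le P N)
  rw [one_mul, Real.norm_natCast, Real.norm_of_nonneg (by positivity)]
  exact_mod_cast hsplit

end

/-- For `P` admissible and either an irreducible quadratic or a product of at least two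
pairwise non-proportional linear factors, with `P(n) ≥ 2` for `n ≥ 1`: the number of
quadruples `(m₁,m₂,n₁,n₂) ∈ [1,N]⁴` with `m₁ ≠ m₂`, `n₁ ≠ n₂`, each `P`-value squarefree,
`P⁺(P(m₁)) = P⁺(P(m₂))`, `P⁺(P(n₁)) = P⁺(P(n₂))`, and `P(m₁)P(m₂)P(n₁)P(n₂)` a perfect
square, is `o(N²)` as `N → ∞`. -/
theorem offdiagonal_quadruples_with_matching_max_prime_o
    (P : Polynomial ℤ)
    (hP : (∃ k : ℕ, 2 ≤ k ∧ ∃ a b : Fin k → ℤ, (∀ i, a i ≠ 0) ∧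
            P = ∏ i, (Polynomial.C (a i) * Polynomial.X + Polynomial.C (b i)) ∧
            ∀ i j, i ≠ j → a i * b j - a j * b i ≠ 0) ∨
          (P.natDegree = 2 ∧ Irreducible P))
    (hadm : ¬ ∃ p : ℕ, p.Prime ∧ ∀ n : ℕ, 0 < n → (p : ℤ)^2 ∣ P.eval (n : ℤ))
    (hpos : ∀ n : ℕ, 0 < n → 2 ≤ P.eval (n : ℤ)) :
    ∀ ε : ℝ, 0 < ε → ∃ N₀ : ℕ, ∀ N : ℕ, N₀ ≤ N →
      (({q : ℕ × ℕ × ℕ × ℕ |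
          (1 ≤ q.1 ∧ q.1 ≤ N) ∧ (1 ≤ q.2.1 ∧ q.2.1 ≤ N) ∧
          (1 ≤ q.2.2.1 ∧ q.2.2.1 ≤ N) ∧ (1 ≤ q.2.2.2 ∧ q.2.2.2 ≤ N) ∧
          q.1 ≠ q.2.1 ∧ q.2.2.1 ≠ q.2.2.2 ∧
          Squarefree (P.eval (q.1 : ℤ)) ∧ Squarefree (P.eval (q.2.1 : ℤ)) ∧
          Squarefree (P.eval (q.2.2.1 : ℤ)) ∧ Squarefree (P.eval (q.2.2.2 : ℤ)) ∧
          (∃ p : ℕ, IsMaxPrimeFac p (P.eval (q.1 : ℤ)) ∧ IsMaxPrimeFac p (P.eval (q.2.1 : ℤ))) ∧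
          (∃ p : ℕ, IsMaxPrimeFac p (P.eval (q.2.2.1 : ℤ)) ∧
            IsMaxPrimeFac p (P.eval (q.2.2.2 : ℤ))) ∧
          IsSquare (P.eval (q.1 : ℤ) * P.eval (q.2.1 : ℤ) *
            P.eval (q.2.2.1 : ℤ) * P.eval (q.2.2.2 : ℤ))}.ncard : ℝ)) ≤
        ε * (N : ℝ)^2 := by
  intro ε hε
  have hd : 2 ≤ P.natDegree := hP.elim
    (fun ⟨_, hk, _, _, ha, h, _⟩ => h ▸ two_le_natDegree_prod_linear hk ha) fun h => h.1.ge
  have hlittleO := offdiagonal_quadruples_with_matching_max_prime_o_general P hd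
  refine Filter.eventually_atTop.1 ((hlittleO.def hε).mono fun N hN => ?_)
  rw [Real.norm_natCast, Real.norm_of_nonneg (by positivity), ← Set.ncard_coe_finset] at hN
  refine le_trans (Nat.cast_le.2 (Set.ncard_le_ncard ?_ (Finset.finite_toSet _))) hN
  rintro q ⟨hm₁, hm₂, hn₁, hn₂, hm, hn, hsq₁, hsq₂, hsq₃, hsq₄, hp, -, hprod⟩
  simp only [matchedQuadruples, Finset.coe_filter, Finset.mem_product, Finset.mem_Icc]
  exact ⟨⟨hm₁, hm₂, hn₁, hn₂⟩, hm, hn, hsq₁, hsq₂, hsq₃, hsq₄, hp, hprod⟩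
end
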